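/- Let f : ℝ^{m-1} × ℝ^m → ℝ be continuous and bounded on ℝ^{m-1} × (closed unit ball), such that for each x′ ∈ ℝ^{m-1} the function u ↦ f(x′,u) coincides on the closed unit ball with an element of ℋ_k. Then g = P_H[f] is infinitely differentiable on ℝ^m_+ × 𝔹^m, satisfies 𝒟_k g = 0 in ℝ^m_+ × 𝔹^m, and there exists a constant a_{m,k} > 0 depending only on m and k such that sup_{ℝ^m_+ × 𝔹^m} |g| ≤ a_{m,k} · sup_{ℝ^{m-1} × 𝔹^m} |f|. -/

import Mathlib

noncomputable section

open MeasureTheory Metric Filter Topology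
open scoped RealInnerProductSpace

/-- `ℝ^m` as a Euclidean space. -/
abbrev Evec (m : ℕ) : Type := EuclideanSpace ℝ (Fin m)

/-- Partial derivative in the `i`-th coordinate direction. -/
def pdv {m : ℕ} (i : Fin m) (f : Evec m → ℝ) (x : Evec m) : ℝ :=
  fderiv ℝ f x (EuclideanSpace.single i 1)

/-- Euclidean Laplacian on `ℝ^m`. -/
def lapl {m : ℕ} (f : Evec m → ℝ) (x : Evec m) : ℝ :=
  ∑ i : Fin m, pdv i (pdv i f) x

/-- `p` is a real-valued polynomial function on `ℝ^m`, homogeneous of degree `k` and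
harmonic; i.e. `p ∈ ℋ_k`. -/
def IsHk (m k : ℕ) (p : Evec m → ℝ) : Prop :=
  (∃ P : MvPolynomial (Fin m) ℝ, ∀ x : Evec m, p x = MvPolynomial.eval (fun i => x i) P) ∧
  (∀ (c : ℝ) (x : Evec m), p (c • x) = c ^ k * p x) ∧
  (∀ x : Evec m, lapl p x = 0)

/-- The surface measure `dS` on the unit sphere `𝕊^{m-1}`, as a measure on `ℝ^m`. -/
def sphereM (m : ℕ) : Measure (Evec m) :=
  Measure.map Subtype.val ((volume : Measure (Evec m)).toSphere)

/-- `ω_m`, the surface area of the unit sphere `𝕊^{m-1}`. -/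
def omegaS (m : ℕ) : ℝ := (sphereM m Set.univ).toReal

/-- The constant `c_{m,k} = 2(m+2k-2)/((m-2)ω_m)`. -/
def cmk (m k : ℕ) : ℝ := 2 * ((m : ℝ) + 2 * k - 2) / (((m : ℝ) - 2) * omegaS m)

/-- The reflection `R_a(u) = u - 2⟨a,u⟩a/|a|²` (in Clifford notation `a u a/|a|²`). -/
def reflv {m : ℕ} (a u : Evec m) : Evec m :=
  u - (2 * ⟪a, u⟫ / ‖a‖ ^ 2) • a

/-- `dim ℋ_k`. -/
def hdim (m k : ℕ) : ℕ :=
  Nat.choose (m + k - 1) (m - 1) - Nat.choose (m + k - 3) (m - 1)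

/-- `Z` is the reproducing kernel `Z_k` of `ℋ_k` on the unit sphere: a symmetric,
rotation invariant kernel, bounded by `dim ℋ_k` on the unit ball, belonging to `ℋ_k`
in the first variable and reproducing elements of `ℋ_k` from their spherical values. -/
def IsZk (m k : ℕ) (Z : Evec m → Evec m → ℝ) : Prop :=
  (∀ v : Evec m, IsHk m k (fun u => Z u v)) ∧
  (∀ p : Evec m → ℝ, IsHk m k p → ∀ v : Evec m, (∫ u, Z u v * p u ∂(sphereM m)) = p v) ∧
  (∀ u v : Evec m, Z u v = Z v u) ∧
  (∀ u v : Evec m, ‖u‖ ≤ 1 → ‖v‖ ≤ 1 → |Z u v| ≤ (hdim m k : ℝ)) ∧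
  (∀ (A : Evec m ≃ₗᵢ[ℝ] Evec m) (u v : Evec m), Z (A u) (A v) = Z u v)

/-- The point `(x', y) ∈ ℝ^{d+1}` with first `d` coordinates `x'` and last coordinate `y`. -/
def upP (d : ℕ) (x' : Evec d) (y : ℝ) : Evec (d + 1) :=
  (EuclideanSpace.equiv (Fin (d + 1)) ℝ).symm
    (Fin.snoc (⇑(EuclideanSpace.equiv (Fin d) ℝ) x') y)

/-- The first `d` coordinates of a point of `ℝ^{d+1}`. -/
def downP (d : ℕ) (x : Evec (d + 1)) : Evec d :=
  (EuclideanSpace.equiv (Fin d) ℝ).symm (fun i => x (Fin.castSucc i))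

/-- The last coordinate of a point of `ℝ^{d+1}`. -/
def lastP (d : ℕ) (x : Evec (d + 1)) : ℝ := x (Fin.last d)

/-- The Poisson kernel `P_H` for bosonic Laplacians in the upper half-space `ℝ^{d+1}_+`,
`P_H(x,t,u,v) = c_{m,k} (y/|x-t|^m) Z_k(R_{x-t}(u), v)` with `m = d+1`, `x = (x',y)`,
`t = (t',0)`. -/
def PH (d k : ℕ) (Z : Evec (d + 1) → Evec (d + 1) → ℝ) (x' : Evec d) (y : ℝ)
    (t' : Evec d) (u v : Evec (d + 1)) : ℝ :=
  cmk (d + 1) k * (y / ‖upP d x' y - upP d t' 0‖ ^ (d + 1)) *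
    Z (reflv (upP d x' y - upP d t' 0) u) v

/-- The Poisson integral `P_H[f]` in the upper half-space. -/
def PHint (d k : ℕ) (Z : Evec (d + 1) → Evec (d + 1) → ℝ)
    (f : Evec d → Evec (d + 1) → ℝ) (x' : Evec d) (y : ℝ) (v : Evec (d + 1)) : ℝ :=
  ∫ t' : Evec d, (∫ u, PH d k Z x' y t' u v * f t' u ∂(sphereM (d + 1)))

/-- The Poisson kernel `P_B` for bosonic Laplacians in the unit ball. -/
def PB (m k : ℕ) (Z : Evec m → Evec m → ℝ) (x ζ ω ν : Evec m) : ℝ :=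
  (cmk m k / 2) * ((1 - ‖x‖ ^ 2) / ‖x - ζ‖ ^ m) * Z (reflv (x - ζ) ω) ν

/-- The Poisson integral `P_B[h]` in the unit ball. -/
def PBint (m k : ℕ) (Z : Evec m → Evec m → ℝ) (h : Evec m → Evec m → ℝ)
    (x ν : Evec m) : ℝ :=
  ∫ ζ, (∫ ω, PB m k Z x ζ ω ν * h ζ ω ∂(sphereM m)) ∂(sphereM m)

/-- Partial derivative in the first (`x`) variable. -/
def pd1 {m : ℕ} (i : Fin m) (f : Evec m → Evec m → ℝ) : Evec m → Evec m → ℝ :=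
  fun x u => fderiv ℝ (fun x₁ => f x₁ u) x (EuclideanSpace.single i 1)

/-- Partial derivative in the second (`u`) variable. -/
def pd2 {m : ℕ} (i : Fin m) (f : Evec m → Evec m → ℝ) : Evec m → Evec m → ℝ :=
  fun x u => fderiv ℝ (fun u₁ => f x u₁) u (EuclideanSpace.single i 1)

/-- The bosonic Laplacian `𝒟_k`. -/
def Dk (m k : ℕ) (f : Evec m → Evec m → ℝ) : Evec m → Evec m → ℝ := fun x u =>
  (∑ i : Fin m, pd1 i (pd1 i f) x u)
    - (4 / ((m : ℝ) + 2 * k - 2)) *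
        ∑ i : Fin m, ∑ j : Fin m, u i * pd1 i (pd2 j (pd1 j f)) x u
    + (4 * ‖u‖ ^ 2 / (((m : ℝ) + 2 * k - 2) * ((m : ℝ) + 2 * k - 4))) *
        ∑ i : Fin m, ∑ j : Fin m, pd2 i (pd1 i (pd2 j (pd1 j f))) x u

/-- `f ∈ C²(Ω×𝔹^m, ℋ_k)`: twice continuously differentiable on `Ω × 𝔹^m` and, for each
fixed `x ∈ Ω`, coinciding in the second variable with an element of `ℋ_k`. -/
def C2Hk (m k : ℕ) (Ω : Set (Evec m)) (f : Evec m → Evec m → ℝ) : Prop :=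
  ContDiffOn ℝ 2 (fun q : Evec m × Evec m => f q.1 q.2) (Ω ×ˢ ball (0 : Evec m) 1) ∧
  ∀ x ∈ Ω, ∃ q, IsHk m k q ∧ ∀ u ∈ closedBall (0 : Evec m) 1, f x u = q u

/-- The `L^p` norm `(∫_{ℝ^{m-1}} ∫_{𝕊^{m-1}} |f(x',u)|^p dS(u) dx')^{1/p}` (`m = d+1`),
valued in `ℝ≥0∞`. -/
def lpH (d : ℕ) (p : ℝ) (f : Evec d → Evec (d + 1) → ℝ) : ENNReal :=
  (∫⁻ x' : Evec d, ∫⁻ u, ENNReal.ofReal (|f x' u| ^ p) ∂(sphereM (d + 1))) ^ (1 / p)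

/-- `f ∈ L^p(ℝ^{m-1}×𝔹^m, ℋ_k)` (`m = d+1`). -/
def MemLpH (d k : ℕ) (p : ℝ) (f : Evec d → Evec (d + 1) → ℝ) : Prop :=
  Measurable (fun q : Evec d × Evec (d + 1) => f q.1 q.2) ∧
  (∀ x' : Evec d, ∃ q, IsHk (d + 1) k q ∧
    ∀ u ∈ closedBall (0 : Evec (d + 1)) 1, f x' u = q u) ∧
  lpH d p f < ⊤

/-- The `L^p` norm `(∫_{𝕊^{m-1}} ∫_{𝕊^{m-1}} |h(ζ,ω)|^p dS(ω) dS(ζ))^{1/p}`,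
valued in `ℝ≥0∞`. -/
def lpS (m : ℕ) (p : ℝ) (h : Evec m → Evec m → ℝ) : ENNReal :=
  (∫⁻ ζ, ∫⁻ ω, ENNReal.ofReal (|h ζ ω| ^ p) ∂(sphereM m) ∂(sphereM m)) ^ (1 / p)

/-- `h ∈ L^p(𝕊^{m-1}×𝔹^m, ℋ_k)`. -/
def MemLpS (m k : ℕ) (p : ℝ) (h : Evec m → Evec m → ℝ) : Prop :=
  Measurable (fun q : Evec m × Evec m => h q.1 q.2) ∧
  (∀ ζ : Evec m, ‖ζ‖ = 1 → ∃ q, IsHk m k q ∧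
    ∀ ω ∈ closedBall (0 : Evec m) 1, h ζ ω = q ω) ∧
  lpS m p h < ⊤

/-- Iterated partial derivative `D_x^α` in the first variable, for a multi-index `α ∈ ℕ^m`. -/
def Dx {m : ℕ} (α : Fin m → ℕ) (f : Evec m → Evec m → ℝ) : Evec m → Evec m → ℝ :=
  (List.finRange m).foldr (fun i g => (pd1 i)^[α i] g) f

/-- Iterated partial derivative `D_ν^β` in the second variable, for a multi-index `β ∈ ℕ^m`. -/
def Dv {m : ℕ} (β : Fin m → ℕ) (f : Evec m → Evec m → ℝ) : Evec m → Evec m → ℝ :=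
  (List.finRange m).foldr (fun i g => (pd2 i)^[β i] g) f

/-!
By the reproducing property and the rotation invariance of `Z_k`, the spherical integral in
`P_H[f]` collapses to `c_{m,k} y |x - t|^{-m} f(t, R_{x-t} v)`. The space `ℋ_k` is finite
dimensional, so interpolating `f(t, ·)` at finitely many nodes `u_i` of the unit ball writes
`P_H[f]` as a finite sum of convolutions over the boundary of the continuous bounded densities
`f(·, u_i)` with kernels `a_m |a|^{-m} p_i(R_a v)`, where `p_i ∈ ℋ_k`. These kernels are smooth and
homogeneous in `a ≠ 0`, so one may differentiate under the integral sign, and they are annihilated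
by `𝒟_k`: differentiating the reflection shows that `F(a, v) = p(R_a v)` satisfies
`|a|² ∂_{a_i} F = 2 (v_i ⟨a, ∇_v F⟩ - ⟨a, v⟩ ∂_{v_i} F)`, and together with the harmonicity and
homogeneity of `F(a, ·)` this equation determines every term of `𝒟_k`. For the bound, `R_{x-t} v`
stays in the unit ball, and translation and dilation reduce `∫ y |x - t|^{-m} dt` to its value at
`x = (0, 1)`.
-/

/-- `f` is differentiable at `x` and its `i`-th partial derivative there is `c`; the counterpart of
`HasDerivAt` for `pdv`. -/
def HasPdvAt {m : ℕ} (i : Fin m) (f : Evec m → ℝ) (x : Evec m) (c : ℝ) : Prop :=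
  DifferentiableAt ℝ f x ∧ pdv i f x = c

namespace HasPdvAt

variable {m : ℕ} {i : Fin m} {f g : Evec m → ℝ} {x : Evec m} {c c' : ℝ}

theorem of_hasFDerivAt {L : Evec m →L[ℝ] ℝ} (h : HasFDerivAt f L x)
    (hc : L (EuclideanSpace.single i 1) = c) : HasPdvAt i f x c :=
  ⟨h.differentiableAt, by rw [pdv, h.fderiv, hc]⟩

theorem of_differentiableAt (h : DifferentiableAt ℝ f x) : HasPdvAt i f x (pdv i f x) := ⟨h, rfl⟩

theorem of_contDiff (h : ContDiff ℝ (⊤ : ℕ∞) f) : HasPdvAt i f x (pdv i f x) :=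
  of_differentiableAt (h.differentiable (by simp) x)

theorem congr_val (h : HasPdvAt i f x c) (hc : c = c') : HasPdvAt i f x c' := hc ▸ h

theorem const (a : ℝ) : HasPdvAt i (fun _ => a) x 0 :=
  of_hasFDerivAt (hasFDerivAt_const a x) (by simp)

theorem coord (j : Fin m) : HasPdvAt i (fun x => x j) x (if i = j then 1 else 0) := by
  refine of_hasFDerivAt (EuclideanSpace.proj (𝕜 := ℝ) j).hasFDerivAt ?_
  simp [eq_comm]

theorem inner_left (a : Evec m) : HasPdvAt i (fun x => ⟪a, x⟫) x (a i) :=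
  of_hasFDerivAt (innerSL ℝ a).hasFDerivAt (by simp [EuclideanSpace.inner_single_right])

theorem norm_sq : HasPdvAt i (fun x => ‖x‖ ^ 2) x (2 * x i) :=
  of_hasFDerivAt (hasStrictFDerivAt_norm_sq x).hasFDerivAt
    (by simp [EuclideanSpace.inner_single_right])

theorem add (hf : HasPdvAt i f x c) (hg : HasPdvAt i g x c') :
    HasPdvAt i (fun x => f x + g x) x (c + c') :=
  of_hasFDerivAt (hf.1.hasFDerivAt.add hg.1.hasFDerivAt) (by rw [← hf.2, ← hg.2]; rfl)

theorem sub (hf : HasPdvAt i f x c) (hg : HasPdvAt i g x c') :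
    HasPdvAt i (fun x => f x - g x) x (c - c') :=
  of_hasFDerivAt (hf.1.hasFDerivAt.sub hg.1.hasFDerivAt) (by rw [← hf.2, ← hg.2]; rfl)

theorem mul (hf : HasPdvAt i f x c) (hg : HasPdvAt i g x c') :
    HasPdvAt i (fun x => f x * g x) x (c * g x + f x * c') :=
  of_hasFDerivAt (hf.1.hasFDerivAt.mul hg.1.hasFDerivAt) (by
    rw [← hf.2, ← hg.2]
    simp only [pdv, _root_.add_apply, _root_.smul_apply, smul_eq_mul]
    ring)

theorem const_mul (a : ℝ) (hf : HasPdvAt i f x c) : HasPdvAt i (fun x => a * f x) x (a * c) :=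
  ((const a).mul hf).congr_val (by ring)

theorem sum {ι : Type*} {s : Finset ι} {f : ι → Evec m → ℝ} {c : ι → ℝ}
    (h : ∀ a ∈ s, HasPdvAt i (f a) x (c a)) :
    HasPdvAt i (fun x => ∑ a ∈ s, f a x) x (∑ a ∈ s, c a) := by
  refine of_hasFDerivAt (HasFDerivAt.fun_sum fun a ha => (h a ha).1.hasFDerivAt) ?_
  rw [_root_.sum_apply]
  exact Finset.sum_congr rfl fun a ha => (h a ha).2

theorem inv_norm_pow (hx : x ≠ 0) (N : ℕ) :
    HasPdvAt i (fun x => (‖x‖ ^ N)⁻¹) x (-(N * x i * (‖x‖ ^ (N + 2))⁻¹)) := by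
  have hn : ‖x‖ ≠ 0 := norm_ne_zero_iff.2 hx
  have hnorm : HasFDerivAt (fun x : Evec m => √(‖x‖ ^ 2)) _ x :=
    (hasStrictFDerivAt_norm_sq x).hasFDerivAt.sqrt (by positivity)
  simp only [Real.sqrt_sq (norm_nonneg _)] at hnorm
  have hpow := (hasDerivAt_pow N ‖x‖).fun_inv (pow_ne_zero N hn)
  refine of_hasFDerivAt (hpow.comp_hasFDerivAt x hnorm) ?_
  simp only [_root_.smul_apply, innerSL_apply_apply, smul_eq_mul, nsmul_eq_mul,
    EuclideanSpace.inner_single_right]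
  rcases N with _ | N
  · simp
  · simp only [Nat.add_sub_cancel, conj_trivial]
    push_cast
    field_simp
    ring

end HasPdvAt

section PartialDerivatives

variable {m : ℕ}

theorem fderiv_fderiv_apply_comm {E F : Type*} [NormedAddCommGroup E] [NormedSpace ℝ E]
    [NormedAddCommGroup F] [NormedSpace ℝ F] {f : E → F} {x : E} (hf : ContDiffAt ℝ 2 f x)
    (a b : E) :
    fderiv ℝ (fun y => fderiv ℝ f y a) x b = fderiv ℝ (fun y => fderiv ℝ f y b) x a := by
  have hd : DifferentiableAt ℝ (fderiv ℝ f) x :=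
    (hf.fderiv_right (m := 1) (by norm_num)).differentiableAt (by norm_num)
  have second_derivative (a b : E) :
      fderiv ℝ (fun y => fderiv ℝ f y a) x b = fderiv ℝ (fderiv ℝ f) x b a := by
    rw [(hd.hasFDerivAt.clm_apply (hasFDerivAt_const a x)).fderiv]
    simp
  rw [second_derivative, second_derivative]
  exact (hf.isSymmSndFDerivAt (by simp)).eq b a

theorem two_le_coe_top : (2 : WithTop ℕ∞) ≤ ((⊤ : ℕ∞) : WithTop ℕ∞) :=
  WithTop.coe_le_coe.2 (le_top : (2 : ℕ∞) ≤ ⊤)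

theorem pdv_comm {f : Evec m → ℝ} (hf : ContDiff ℝ (⊤ : ℕ∞) f) (a b : Fin m) :
    pdv a (pdv b f) = pdv b (pdv a f) :=
  funext fun _ => fderiv_fderiv_apply_comm (hf.contDiffAt.of_le two_le_coe_top) _ _

theorem contDiff_pdv {f : Evec m → ℝ} (hf : ContDiff ℝ (⊤ : ℕ∞) f) (a : Fin m) :
    ContDiff ℝ (⊤ : ℕ∞) (pdv a f) :=
  (hf.fderiv_right (m := (⊤ : ℕ∞)) (by simp)).clm_apply contDiff_const

theorem fderiv_apply_eq_sum_pdv (f : Evec m → ℝ) (x e : Evec m) :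
    fderiv ℝ f x e = ∑ a, e a * pdv a f x := by
  conv_lhs => rw [← (EuclideanSpace.basisFun (Fin m) ℝ).sum_repr e]
  simp [pdv]

theorem sum_coord_mul_coord (x w : Evec m) : ∑ j, x j * w j = ⟪x, w⟫ := by
  simp [PiLp.inner_apply, mul_comm]

theorem sum_coord_sq (x : Evec m) : ∑ j, x j * x j = ‖x‖ ^ 2 := by
  rw [sum_coord_mul_coord, real_inner_self_eq_norm_sq]

theorem contDiff_coord (l : Fin m) : ContDiff ℝ (⊤ : ℕ∞) (fun x : Evec m => x l) :=
  (EuclideanSpace.proj (𝕜 := ℝ) l).contDiff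

theorem contDiffOn_inv_norm_pow (N : ℕ) :
    ContDiffOn ℝ (⊤ : ℕ∞) (fun x : Evec m => (‖x‖ ^ N)⁻¹) {0}ᶜ := fun _ hx =>
  (((contDiffAt_norm ℝ hx).pow N).inv
    (pow_ne_zero N (norm_ne_zero_iff.2 hx))).contDiffWithinAt

end PartialDerivatives

/-- Smooth harmonic functions satisfying Euler's identity for the degree `κ`. Membership in `ℋ_k`
implies `EulerHarmonic k`, and, unlike `ℋ_k`, the class is stable under `pdv` with the degree
lowered by one, whatever `κ` is. -/
structure EulerHarmonic {m : ℕ} (κ : ℝ) (Q : Evec m → ℝ) : Prop where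
  contDiff : ContDiff ℝ (⊤ : ℕ∞) Q
  euler : ∀ w, ∑ j, w j * pdv j Q w = κ * Q w
  harmonic : ∀ w, lapl Q w = 0

namespace EulerHarmonic

variable {m : ℕ} {κ : ℝ} {Q : Evec m → ℝ}

theorem euler_pdv (hQ : EulerHarmonic κ Q) (a : Fin m) (w : Evec m) :
    ∑ j, w j * pdv j (pdv a Q) w = (κ - 1) * pdv a Q w := by
  have hsum : HasPdvAt a (fun w => ∑ j, w j * pdv j Q w) w
      (∑ j, ((if a = j then 1 else 0) * pdv j Q w + w j * pdv a (pdv j Q) w)) :=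
    .sum fun j _ => (HasPdvAt.coord j).mul (.of_contDiff (contDiff_pdv hQ.contDiff j))
  have heuler := (HasPdvAt.of_contDiff (i := a) (x := w) hQ.contDiff).const_mul κ
  rw [← funext hQ.euler] at heuler
  have := hsum.2.symm.trans heuler.2
  simp only [Finset.sum_add_distrib, ite_mul, one_mul, zero_mul, Finset.sum_ite_eq,
    Finset.mem_univ, if_true] at this
  simp only [pdv_comm hQ.contDiff _ a]
  linarith

end EulerHarmonic

/-- Joint smoothness of `f(x, v)` for `x ∈ U` and arbitrary `v`. -/
def JointSmooth {m : ℕ} (U : Set (Evec m)) (f : Evec m → Evec m → ℝ) : Prop :=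
  ContDiffOn ℝ (⊤ : ℕ∞) (fun q : Evec m × Evec m => f q.1 q.2) (U ×ˢ Set.univ)

namespace JointSmooth

variable {m : ℕ} {U : Set (Evec m)} {f g : Evec m → Evec m → ℝ} {x : Evec m}

theorem contDiffAt (hU : IsOpen U) (hf : JointSmooth U f) (hx : x ∈ U) (v : Evec m) :
    ContDiffAt ℝ (⊤ : ℕ∞) (fun q : Evec m × Evec m => f q.1 q.2) (x, v) :=
  ContDiffOn.contDiffAt hf ((hU.prod isOpen_univ).mem_nhds ⟨hx, trivial⟩)

theorem contDiff_right (hf : JointSmooth U f) (hx : x ∈ U) : ContDiff ℝ (⊤ : ℕ∞) (f x) :=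
  contDiffOn_univ.1 <| ContDiffOn.comp (f := fun v => (x, v)) hf
    (contDiff_const.prodMk contDiff_id).contDiffOn fun _ _ => ⟨hx, trivial⟩

theorem hasPdvAt_left_fderiv (hU : IsOpen U) (hf : JointSmooth U f) (i : Fin m) (hx : x ∈ U)
    (v : Evec m) : HasPdvAt i (fun x => f x v) x
      (fderiv ℝ (fun q : Evec m × Evec m => f q.1 q.2) (x, v) (EuclideanSpace.single i 1, 0)) :=
  .of_hasFDerivAt (((hf.contDiffAt hU hx v).differentiableAt (by simp)).hasFDerivAt.comp
    (f := fun x => (x, v)) x ((hasFDerivAt_id x).prodMk (hasFDerivAt_const v x))) (by simp)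

theorem hasPdvAt_right_fderiv (hU : IsOpen U) (hf : JointSmooth U f) (i : Fin m) (hx : x ∈ U)
    (v : Evec m) : HasPdvAt i (f x) v
      (fderiv ℝ (fun q : Evec m × Evec m => f q.1 q.2) (x, v) (0, EuclideanSpace.single i 1)) :=
  .of_hasFDerivAt (((hf.contDiffAt hU hx v).differentiableAt (by simp)).hasFDerivAt.comp
    (f := fun v => (x, v)) v ((hasFDerivAt_const x v).prodMk (hasFDerivAt_id v))) (by simp)

theorem hasPdvAt_left (hU : IsOpen U) (hf : JointSmooth U f) (i : Fin m) (hx : x ∈ U)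
    (v : Evec m) : HasPdvAt i (fun x => f x v) x (pd1 i f x v) :=
  .of_differentiableAt (hf.hasPdvAt_left_fderiv hU i hx v).1

theorem hasPdvAt_right (hf : JointSmooth U f) (i : Fin m) (hx : x ∈ U)
    (v : Evec m) : HasPdvAt i (f x) v (pd2 i f x v) :=
  .of_contDiff (hf.contDiff_right hx)

protected theorem pd1 (hU : IsOpen U) (hf : JointSmooth U f) (i : Fin m) :
    JointSmooth U (pd1 i f) :=
  ((ContDiffOn.fderiv_of_isOpen hf (hU.prod isOpen_univ) (m := (⊤ : ℕ∞)) (by simp)).clm_apply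
    contDiffOn_const).congr fun q hq => (hf.hasPdvAt_left_fderiv hU i hq.1 q.2).2

protected theorem pd2 (hU : IsOpen U) (hf : JointSmooth U f) (i : Fin m) :
    JointSmooth U (pd2 i f) :=
  ((ContDiffOn.fderiv_of_isOpen hf (hU.prod isOpen_univ) (m := (⊤ : ℕ∞)) (by simp)).clm_apply
    contDiffOn_const).congr fun q hq => (hf.hasPdvAt_right_fderiv hU i hq.1 q.2).2

theorem pd1_pd2_comm (hU : IsOpen U) (hf : JointSmooth U f) (i j : Fin m) (hx : x ∈ U)
    (v : Evec m) : pd1 i (pd2 j f) x v = pd2 j (pd1 i f) x v := by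
  have hnhds : U ×ˢ Set.univ ∈ 𝓝 (x, v) := (hU.prod isOpen_univ).mem_nhds ⟨hx, trivial⟩
  have hleft : (fun q : Evec m × Evec m => pd1 i f q.1 q.2) =ᶠ[𝓝 (x, v)] fun q =>
      fderiv ℝ (fun q : Evec m × Evec m => f q.1 q.2) q (EuclideanSpace.single i 1, 0) := by
    filter_upwards [hnhds] with q hq using (hf.hasPdvAt_left_fderiv hU i hq.1 q.2).2
  have hright : (fun q : Evec m × Evec m => pd2 j f q.1 q.2) =ᶠ[𝓝 (x, v)] fun q =>
      fderiv ℝ (fun q : Evec m × Evec m => f q.1 q.2) q (0, EuclideanSpace.single j 1) := by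
    filter_upwards [hnhds] with q hq using (hf.hasPdvAt_right_fderiv hU j hq.1 q.2).2
  calc pd1 i (pd2 j f) x v
      = fderiv ℝ (fun q : Evec m × Evec m => pd2 j f q.1 q.2) (x, v) _ :=
        ((hf.pd2 hU j).hasPdvAt_left_fderiv hU i hx v).2
    _ = fderiv ℝ (fun q : Evec m × Evec m => pd1 i f q.1 q.2) (x, v) _ := by
        rw [hleft.fderiv_eq, hright.fderiv_eq]
        exact fderiv_fderiv_apply_comm ((hf.contDiffAt hU hx v).of_le two_le_coe_top) _ _
    _ = pd2 j (pd1 i f) x v := ((hf.pd1 hU i).hasPdvAt_right_fderiv hU j hx v).2.symm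

theorem pd2_pd2_comm (hf : JointSmooth U f) (i j : Fin m) (hx : x ∈ U) (v : Evec m) :
    pd2 i (pd2 j f) x v = pd2 j (pd2 i f) x v :=
  congrFun (pdv_comm (hf.contDiff_right hx) i j) v

theorem mul_left (hf : JointSmooth U f) {γ : Evec m → ℝ} (hγ : ContDiffOn ℝ (⊤ : ℕ∞) γ U) :
    JointSmooth U (fun x v => γ x * f x v) :=
  (hγ.comp contDiffOn_fst fun _ hq => hq.1).mul hf

protected theorem sum {ι : Type*} {s : Finset ι} {f : ι → Evec m → Evec m → ℝ}
    (hf : ∀ a ∈ s, JointSmooth U (f a)) : JointSmooth U (fun x v => ∑ a ∈ s, f a x v) :=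
  ContDiffOn.sum hf

end JointSmooth

/-- The operator `⟨x, D_v⟩`, differentiating the fibre variable in the direction of the base
point. -/
def radialDeriv {m : ℕ} (f : Evec m → Evec m → ℝ) : Evec m → Evec m → ℝ :=
  fun x v => ∑ a, x a * pd2 a f x v

/-- The operator `⟨v, D_x⟩`, differentiating the base variable in the direction of the fibre
point. -/
def tangentDeriv {m : ℕ} (f : Evec m → Evec m → ℝ) : Evec m → Evec m → ℝ :=
  fun x v => ∑ i, v i * pd1 i f x v

/-- The mixed divergence `⟨D_v, D_x⟩`. -/
def mixedDiv {m : ℕ} (f : Evec m → Evec m → ℝ) : Evec m → Evec m → ℝ :=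
  fun x v => ∑ j, pd2 j (pd1 j f) x v

/-- The Laplacian `Δ_x` in the base variable. -/
def baseLapl {m : ℕ} (f : Evec m → Evec m → ℝ) : Evec m → Evec m → ℝ :=
  fun x v => ∑ i, pd1 i (pd1 i f) x v

section Operators

variable {m : ℕ} {U : Set (Evec m)} {f g : Evec m → Evec m → ℝ} {x : Evec m}

theorem pd1_congr (hU : IsOpen U) (h : ∀ x ∈ U, ∀ v, g x v = f x v) (i : Fin m) (hx : x ∈ U)
    (v : Evec m) : pd1 i g x v = pd1 i f x v := by
  have : (fun x => g x v) =ᶠ[𝓝 x] fun x => f x v := by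
    filter_upwards [hU.mem_nhds hx] with z hz using h z hz v
  rw [pd1, this.fderiv_eq, pd1]

theorem pd2_eq_pdv {q : Evec m → ℝ} (h : ∀ v, f x v = q v) (i : Fin m) (v : Evec m) :
    pd2 i f x v = pdv i q v :=
  congrArg (fun q => pdv i q v) (funext h)

theorem tangentDeriv_congr (hU : IsOpen U) (h : ∀ x ∈ U, ∀ v, g x v = f x v) (hx : x ∈ U)
    (v : Evec m) : tangentDeriv g x v = tangentDeriv f x v :=
  Finset.sum_congr rfl fun i _ => by rw [pd1_congr hU h i hx]

theorem mixedDiv_congr (hU : IsOpen U) (h : ∀ x ∈ U, ∀ v, g x v = f x v) (hx : x ∈ U)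
    (v : Evec m) : mixedDiv g x v = mixedDiv f x v :=
  Finset.sum_congr rfl fun i _ => pd2_eq_pdv (pd1_congr hU h i hx) i v

theorem Dk_eq (hU : IsOpen U) (hf : JointSmooth U f) (k : ℕ) (hx : x ∈ U) (v : Evec m) :
    Dk m k f x v = baseLapl f x v
      - 4 / (m + 2 * k - 2) * tangentDeriv (mixedDiv f) x v
      + 4 * ‖v‖ ^ 2 / ((m + 2 * k - 2) * (m + 2 * k - 4)) * mixedDiv (mixedDiv f) x v := by
  have hsmooth (j : Fin m) : JointSmooth U (pd2 j (pd1 j f)) := (hf.pd1 hU j).pd2 hU j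
  have pd1_mixedDiv (i : Fin m) {z : Evec m} (hz : z ∈ U) (w : Evec m) :
      pd1 i (mixedDiv f) z w = ∑ j, pd1 i (pd2 j (pd1 j f)) z w :=
    (HasPdvAt.sum fun j _ => (hsmooth j).hasPdvAt_left hU i hz w).2
  have pd2_pd1_mixedDiv (i : Fin m) :
      pd2 i (pd1 i (mixedDiv f)) x v = ∑ j, pd2 i (pd1 i (pd2 j (pd1 j f))) x v :=
    (pd2_eq_pdv (pd1_mixedDiv i hx) i v).trans
      (HasPdvAt.sum fun j _ => ((hsmooth j).pd1 hU i).hasPdvAt_right i hx v).2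
  simp only [Dk, baseLapl, tangentDeriv, mixedDiv.eq_def (mixedDiv f), pd1_mixedDiv _ hx,
    pd2_pd1_mixedDiv, Finset.mul_sum]

theorem JointSmooth.radialDeriv (hU : IsOpen U) (hf : JointSmooth U f) :
    JointSmooth U (radialDeriv f) :=
  .sum fun a _ => (hf.pd2 hU a).mul_left (contDiff_coord a).contDiffOn

theorem pd2_radialDeriv (hU : IsOpen U) (hf : JointSmooth U f) (l : Fin m) (hx : x ∈ U)
    (v : Evec m) : pd2 l (radialDeriv f) x v = radialDeriv (pd2 l f) x v :=
  (HasPdvAt.sum fun a _ => ((hf.pd2 hU a).hasPdvAt_right l hx v).const_mul (x a)).2.trans <|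
    Finset.sum_congr rfl fun a _ => by rw [hf.pd2_pd2_comm l a hx]

theorem pd1_radialDeriv (hU : IsOpen U) (hf : JointSmooth U f) (i : Fin m) (hx : x ∈ U)
    (v : Evec m) : pd1 i (radialDeriv f) x v = pd2 i f x v + radialDeriv (pd1 i f) x v := by
  have hsum : pd1 i (radialDeriv f) x v
      = ∑ a, ((if i = a then 1 else 0) * pd2 a f x v + x a * pd1 i (pd2 a f) x v) :=
    (HasPdvAt.sum fun a _ => (HasPdvAt.coord a).mul ((hf.pd2 hU a).hasPdvAt_left hU i hx v)).2
  simp [hsum, radialDeriv, Finset.sum_add_distrib, hf.pd1_pd2_comm hU i _ hx]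

theorem pd2_tangentDeriv (hU : IsOpen U) (hf : JointSmooth U f) (l : Fin m) (hx : x ∈ U)
    (v : Evec m) : pd2 l (tangentDeriv f) x v = pd1 l f x v + tangentDeriv (pd2 l f) x v := by
  have hsum : pd2 l (tangentDeriv f) x v
      = ∑ i, ((if l = i then 1 else 0) * pd1 i f x v + v i * pd2 l (pd1 i f) x v) :=
    (HasPdvAt.sum fun i _ => (HasPdvAt.coord i).mul ((hf.pd1 hU i).hasPdvAt_right l hx v)).2
  simp [hsum, tangentDeriv, Finset.sum_add_distrib, hf.pd1_pd2_comm hU _ l hx]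

theorem mixedDiv_pd2 (hU : IsOpen U) (hf : JointSmooth U f) (l : Fin m) (hx : x ∈ U)
    (v : Evec m) : mixedDiv (pd2 l f) x v = pd2 l (mixedDiv f) x v := by
  have hdiv : pd2 l (mixedDiv f) x v = ∑ j, pd2 l (pd2 j (pd1 j f)) x v :=
    (HasPdvAt.sum fun j _ => ((hf.pd1 hU j).pd2 hU j).hasPdvAt_right l hx v).2
  rw [hdiv]
  exact Finset.sum_congr rfl fun j _ =>
    (pd2_eq_pdv (hf.pd1_pd2_comm hU j l hx) j v).trans ((hf.pd1 hU j).pd2_pd2_comm j l hx v)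

theorem tangentDeriv_radialDeriv (hU : IsOpen U) (hf : JointSmooth U f) (hx : x ∈ U)
    (v : Evec m) : tangentDeriv (radialDeriv f) x v = radialDeriv (tangentDeriv f) x v
      + ∑ a, v a * pd2 a f x v - ∑ a, x a * pd1 a f x v := by
  have hswap : ∑ i, v i * radialDeriv (pd1 i f) x v
      = ∑ a, x a * tangentDeriv (pd2 a f) x v := by
    simp only [radialDeriv, tangentDeriv, Finset.mul_sum, hf.pd1_pd2_comm hU _ _ hx]
    rw [Finset.sum_comm]
    exact Finset.sum_congr rfl fun _ _ => Finset.sum_congr rfl fun _ _ => by ring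
  rw [tangentDeriv, radialDeriv.eq_def (tangentDeriv f)]
  simp only [pd1_radialDeriv hU hf _ hx, pd2_tangentDeriv hU hf _ hx, mul_add,
    Finset.sum_add_distrib, hswap]
  ring

theorem mixedDiv_radialDeriv (hU : IsOpen U) (hf : JointSmooth U f) (hx : x ∈ U)
    (v : Evec m) :
    mixedDiv (radialDeriv f) x v = lapl (f x) v + radialDeriv (mixedDiv f) x v := by
  have hterm (j : Fin m) : pd2 j (pd1 j (radialDeriv f)) x v
      = pd2 j (pd2 j f) x v + radialDeriv (pd2 j (pd1 j f)) x v := by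
    rw [pd2_eq_pdv (pd1_radialDeriv hU hf j hx), ← pd2_radialDeriv hU (hf.pd1 hU j) j hx]
    exact (((hf.pd2 hU j).hasPdvAt_right j hx v).add
      (((hf.pd1 hU j).radialDeriv hU).hasPdvAt_right j hx v)).2
  have hdiv (a : Fin m) : pd2 a (mixedDiv f) x v = ∑ j, pd2 a (pd2 j (pd1 j f)) x v :=
    (HasPdvAt.sum fun j _ => ((hf.pd1 hU j).pd2 hU j).hasPdvAt_right a hx v).2
  have hswap : radialDeriv (mixedDiv f) x v = ∑ j, radialDeriv (pd2 j (pd1 j f)) x v := by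
    simp only [radialDeriv, hdiv, Finset.mul_sum]
    exact Finset.sum_comm
  simp only [mixedDiv.eq_def (radialDeriv f), hterm, Finset.sum_add_distrib, hswap]
  rfl

variable {γ : Evec m → ℝ}

theorem pd1_mul_left (hU : IsOpen U) (hγ : ContDiffOn ℝ (⊤ : ℕ∞) γ U) (hf : JointSmooth U f)
    (i : Fin m) (hx : x ∈ U) (v : Evec m) :
    pd1 i (fun x v => γ x * f x v) x v = pdv i γ x * f x v + γ x * pd1 i f x v :=
  ((HasPdvAt.of_differentiableAt ((hγ.contDiffAt (hU.mem_nhds hx)).differentiableAt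
    (by simp))).mul (hf.hasPdvAt_left hU i hx v)).2

theorem tangentDeriv_mul_left (hU : IsOpen U) (hγ : ContDiffOn ℝ (⊤ : ℕ∞) γ U)
    (hf : JointSmooth U f) (hx : x ∈ U) (v : Evec m) :
    tangentDeriv (fun x v => γ x * f x v) x v
      = (∑ i, v i * pdv i γ x) * f x v + γ x * tangentDeriv f x v := by
  simp only [tangentDeriv, pd1_mul_left hU hγ hf _ hx, Finset.sum_mul, Finset.mul_sum,
    ← Finset.sum_add_distrib]
  exact Finset.sum_congr rfl fun i _ => by ring

theorem mixedDiv_mul_left (hU : IsOpen U) (hγ : ContDiffOn ℝ (⊤ : ℕ∞) γ U)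
    (hf : JointSmooth U f) (hx : x ∈ U) (v : Evec m) :
    mixedDiv (fun x v => γ x * f x v) x v
      = ∑ j, pd2 j f x v * pdv j γ x + γ x * mixedDiv f x v := by
  have hterm (j : Fin m) : pd2 j (pd1 j fun x v => γ x * f x v) x v
      = pdv j γ x * pd2 j f x v + γ x * pd2 j (pd1 j f) x v := by
    rw [pd2_eq_pdv (pd1_mul_left hU hγ hf j hx)]
    exact (((hf.hasPdvAt_right j hx v).const_mul _).add
      (((hf.pd1 hU j).hasPdvAt_right j hx v).const_mul _)).2
  simp only [mixedDiv, hterm, Finset.mul_sum, ← Finset.sum_add_distrib, mul_comm (pdv _ γ x)]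

theorem contDiffOn_pdv (hU : IsOpen U) (hγ : ContDiffOn ℝ (⊤ : ℕ∞) γ U) (i : Fin m) :
    ContDiffOn ℝ (⊤ : ℕ∞) (pdv i γ) U :=
  (hγ.fderiv_of_isOpen hU (m := (⊤ : ℕ∞)) (by simp)).clm_apply contDiffOn_const

theorem baseLapl_mul_left (hU : IsOpen U) (hγ : ContDiffOn ℝ (⊤ : ℕ∞) γ U)
    (hf : JointSmooth U f) (hx : x ∈ U) (v : Evec m) :
    baseLapl (fun x v => γ x * f x v) x v
      = lapl γ x * f x v + 2 * ∑ i, pd1 i f x v * pdv i γ x + γ x * baseLapl f x v := by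
  have hterm (i : Fin m) : pd1 i (pd1 i fun x v => γ x * f x v) x v
      = pdv i (pdv i γ) x * f x v + 2 * (pd1 i f x v * pdv i γ x) + γ x * pd1 i (pd1 i f) x v := by
    have hγi := contDiffOn_pdv hU hγ i
    have hfi := hf.pd1 hU i
    rw [pd1_congr hU (fun z hz => pd1_mul_left hU hγ hf i hz) i hx]
    refine (((hf.mul_left hγi).hasPdvAt_left hU i hx v).add
      ((hfi.mul_left hγ).hasPdvAt_left hU i hx v)).2.trans ?_
    rw [pd1_mul_left hU hγi hf i hx, pd1_mul_left hU hγ hfi i hx]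
    ring
  simp only [baseLapl, hterm, Finset.sum_add_distrib, Finset.mul_sum, lapl, Finset.sum_mul]

theorem tangentDeriv_add_const_mul (hU : IsOpen U) (hf : JointSmooth U f) (hg : JointSmooth U g)
    (c : ℝ) (hx : x ∈ U) (v : Evec m) :
    tangentDeriv (fun x v => f x v + c * g x v) x v
      = tangentDeriv f x v + c * tangentDeriv g x v := by
  have hterm (i : Fin m) :
      pd1 i (fun x v => f x v + c * g x v) x v = pd1 i f x v + c * pd1 i g x v :=
    ((hf.hasPdvAt_left hU i hx v).add ((hg.hasPdvAt_left hU i hx v).const_mul c)).2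
  simp only [tangentDeriv, hterm, Finset.mul_sum, ← Finset.sum_add_distrib]
  exact Finset.sum_congr rfl fun i _ => by ring

theorem mixedDiv_add_const_mul (hU : IsOpen U) (hf : JointSmooth U f) (hg : JointSmooth U g)
    (c : ℝ) (hx : x ∈ U) (v : Evec m) :
    mixedDiv (fun x v => f x v + c * g x v) x v = mixedDiv f x v + c * mixedDiv g x v := by
  have hterm (j : Fin m) : pd2 j (pd1 j fun x v => f x v + c * g x v) x v
      = pd2 j (pd1 j f) x v + c * pd2 j (pd1 j g) x v := by
    rw [pd2_eq_pdv fun w => ((hf.hasPdvAt_left hU j hx w).add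
      ((hg.hasPdvAt_left hU j hx w).const_mul c)).2]
    exact (((hf.pd1 hU j).hasPdvAt_right j hx v).add
      (((hg.pd1 hU j).hasPdvAt_right j hx v).const_mul c)).2
  simp only [mixedDiv, hterm, Finset.mul_sum, Finset.sum_add_distrib]

end Operators

/-- Fields `F(x, v)` that are harmonic and homogeneous of degree `κ` in `v` and obey the first-order
equation `∂_{x_i} F = 2|x|⁻² (v_i ⟨x, D_v⟩ - ⟨x, v⟩ ∂_{v_i}) F`. The model is `F(x, v) = Q(R_x v)`:
when `x` moves, `R_x` changes by an infinitesimal rotation. -/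
structure RotHarmonic {m : ℕ} (κ : ℝ) (F : Evec m → Evec m → ℝ) : Prop where
  jointSmooth : JointSmooth {0}ᶜ F
  eulerHarmonic : ∀ x ≠ 0, EulerHarmonic κ (F x)
  pd1_eq : ∀ x ≠ 0, ∀ v i, pd1 i F x v
    = 2 * (‖x‖ ^ 2)⁻¹ * (v i * radialDeriv F x v - ⟪x, v⟫ * pd2 i F x v)

namespace RotHarmonic

variable {m : ℕ} {κ : ℝ} {F : Evec m → Evec m → ℝ} {x : Evec m}

theorem jointSmooth_radialDeriv (hF : RotHarmonic κ F) : JointSmooth {0}ᶜ (radialDeriv F) :=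
  hF.jointSmooth.radialDeriv isOpen_compl_singleton

theorem pd2_radialDeriv (hF : RotHarmonic κ F) (hx : x ≠ 0) (v : Evec m) (l : Fin m) :
    pd2 l (radialDeriv F) x v = radialDeriv (pd2 l F) x v :=
  _root_.pd2_radialDeriv isOpen_compl_singleton hF.jointSmooth l hx v

theorem sum_mul_pd2 (hF : RotHarmonic κ F) (hx : x ≠ 0) (v : Evec m) :
    ∑ j, v j * pd2 j F x v = κ * F x v :=
  (hF.eulerHarmonic x hx).euler v

theorem sum_mul_pd2_radialDeriv (hF : RotHarmonic κ F) (hx : x ≠ 0) (v : Evec m) :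
    ∑ j, v j * pd2 j (radialDeriv F) x v = (κ - 1) * radialDeriv F x v := by
  have heuler (a : Fin m) : ∑ j, v j * pd2 j (pd2 a F) x v = (κ - 1) * pd2 a F x v :=
    (hF.eulerHarmonic x hx).euler_pdv a v
  simp only [hF.pd2_radialDeriv hx, radialDeriv, Finset.mul_sum]
  rw [Finset.sum_comm]
  refine Finset.sum_congr rfl fun a _ => ?_
  rw [mul_left_comm, ← heuler, Finset.mul_sum]
  exact Finset.sum_congr rfl fun j _ => by
    rw [hF.jointSmooth.pd2_pd2_comm a j hx]; ring

theorem sum_mul_pd1 (hF : RotHarmonic κ F) (hx : x ≠ 0) (v : Evec m) :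
    ∑ i, x i * pd1 i F x v = 0 := by
  calc ∑ i, x i * pd1 i F x v
      = 2 * (‖x‖ ^ 2)⁻¹ * ((∑ i, x i * v i) * radialDeriv F x v
        - ⟪x, v⟫ * ∑ i, x i * pd2 i F x v) := by
        simp only [hF.pd1_eq x hx, Finset.mul_sum, Finset.sum_mul, ← Finset.sum_sub_distrib]
        exact Finset.sum_congr rfl fun i _ => by ring
    _ = 0 := by rw [sum_coord_mul_coord, ← radialDeriv]; ring

theorem tangentDeriv_eq (hF : RotHarmonic κ F) (hx : x ≠ 0) (v : Evec m) :
    tangentDeriv F x v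
      = 2 * (‖x‖ ^ 2)⁻¹ * (‖v‖ ^ 2 * radialDeriv F x v - κ * (⟪x, v⟫ * F x v)) := by
  calc tangentDeriv F x v
      = 2 * (‖x‖ ^ 2)⁻¹ * ((∑ i, v i * v i) * radialDeriv F x v
        - ⟪x, v⟫ * ∑ i, v i * pd2 i F x v) := by
        simp only [tangentDeriv, hF.pd1_eq x hx, Finset.mul_sum, Finset.sum_mul,
          ← Finset.sum_sub_distrib]
        exact Finset.sum_congr rfl fun i _ => by ring
    _ = _ := by rw [sum_coord_sq, hF.sum_mul_pd2 hx]; ring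

theorem mixedDiv_eq (hF : RotHarmonic κ F) (hx : x ≠ 0) (v : Evec m) :
    mixedDiv F x v = 2 * (m + κ - 2) * (‖x‖ ^ 2)⁻¹ * radialDeriv F x v := by
  have hterm (j : Fin m) : pd2 j (pd1 j F) x v
      = 2 * (‖x‖ ^ 2)⁻¹ * (radialDeriv F x v + v j * pd2 j (radialDeriv F) x v
        - (x j * pd2 j F x v + ⟪x, v⟫ * pd2 j (pd2 j F) x v)) := by
    rw [pd2_eq_pdv fun w => hF.pd1_eq x hx w j]
    refine (HasPdvAt.const_mul _ (((HasPdvAt.coord j).mul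
      (hF.jointSmooth_radialDeriv.hasPdvAt_right j hx v)).sub ((HasPdvAt.inner_left x).mul
      ((hF.jointSmooth.pd2 isOpen_compl_singleton j).hasPdvAt_right j hx v)))).2.trans ?_
    simp
  have hharm : ∑ j, pd2 j (pd2 j F) x v = 0 := (hF.eulerHarmonic x hx).harmonic v
  simp only [mixedDiv, hterm, ← Finset.mul_sum, Finset.sum_sub_distrib, Finset.sum_add_distrib,
    hharm, hF.sum_mul_pd2_radialDeriv hx]
  rw [← radialDeriv]
  simp only [Finset.sum_const, Finset.card_univ, Fintype.card_fin, nsmul_eq_mul]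
  ring

theorem pd2_tangentDeriv (hF : RotHarmonic κ F) (hx : x ≠ 0) (v : Evec m) (l : Fin m) :
    pd2 l (tangentDeriv F) x v = 2 * (‖x‖ ^ 2)⁻¹ * (2 * v l * radialDeriv F x v
      + ‖v‖ ^ 2 * pd2 l (radialDeriv F) x v
      - κ * (x l * F x v + ⟪x, v⟫ * pd2 l F x v)) := by
  rw [pd2_eq_pdv (hF.tangentDeriv_eq hx)]
  exact (HasPdvAt.const_mul _ ((HasPdvAt.norm_sq.mul
    (hF.jointSmooth_radialDeriv.hasPdvAt_right l hx v)).sub (((HasPdvAt.inner_left x).mul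
    (hF.jointSmooth.hasPdvAt_right l hx v)).const_mul κ))).2

theorem tangentDeriv_pd2 (hF : RotHarmonic κ F) (hx : x ≠ 0) (v : Evec m) (l : Fin m) :
    tangentDeriv (pd2 l F) x v = 2 * (‖x‖ ^ 2)⁻¹ * (v l * radialDeriv F x v
      + ‖v‖ ^ 2 * pd2 l (radialDeriv F) x v
      - κ * (x l * F x v) - (κ - 1) * (⟪x, v⟫ * pd2 l F x v)) := by
  have hcomm := _root_.pd2_tangentDeriv isOpen_compl_singleton hF.jointSmooth l hx v
  linear_combination hF.pd2_tangentDeriv hx v l - hcomm - hF.pd1_eq x hx v l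

theorem tangentDeriv_radialDeriv (hF : RotHarmonic κ F) (hx : x ≠ 0) (v : Evec m) :
    tangentDeriv (radialDeriv F) x v = -(κ * F x v)
      + 2 * (‖x‖ ^ 2)⁻¹ * (‖v‖ ^ 2 * radialDeriv (radialDeriv F) x v
        - (κ - 2) * (⟪x, v⟫ * radialDeriv F x v)) := by
  have hradial : radialDeriv (tangentDeriv F) x v = 2 * (‖x‖ ^ 2)⁻¹ *
      (2 * (∑ a, x a * v a) * radialDeriv F x v
        + ‖v‖ ^ 2 * ∑ a, x a * pd2 a (radialDeriv F) x v
        - κ * ((∑ a, x a * x a) * F x v + ⟪x, v⟫ * ∑ a, x a * pd2 a F x v)) := by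
    simp only [radialDeriv.eq_def (tangentDeriv F), hF.pd2_tangentDeriv hx, Finset.mul_sum,
      Finset.sum_mul, ← Finset.sum_sub_distrib, ← Finset.sum_add_distrib]
    exact Finset.sum_congr rfl fun a _ => by ring
  rw [_root_.tangentDeriv_radialDeriv isOpen_compl_singleton hF.jointSmooth hx, hradial,
    ← radialDeriv, ← radialDeriv, hF.sum_mul_pd2 hx, hF.sum_mul_pd1 hx, sum_coord_mul_coord,
    sum_coord_sq]
  have hx' : ‖x‖ ≠ 0 := norm_ne_zero_iff.2 hx
  field_simp
  ring

theorem mixedDiv_pd2 (hF : RotHarmonic κ F) (hx : x ≠ 0) (v : Evec m) (l : Fin m) :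
    mixedDiv (pd2 l F) x v
      = 2 * (m + κ - 2) * (‖x‖ ^ 2)⁻¹ * pd2 l (radialDeriv F) x v := by
  rw [_root_.mixedDiv_pd2 isOpen_compl_singleton hF.jointSmooth l hx,
    pd2_eq_pdv (hF.mixedDiv_eq hx)]
  exact ((hF.jointSmooth_radialDeriv.hasPdvAt_right l hx v).const_mul _).2

theorem mixedDiv_radialDeriv (hF : RotHarmonic κ F) (hx : x ≠ 0) (v : Evec m) :
    mixedDiv (radialDeriv F) x v
      = 2 * (m + κ - 2) * (‖x‖ ^ 2)⁻¹ * radialDeriv (radialDeriv F) x v := by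
  rw [_root_.mixedDiv_radialDeriv isOpen_compl_singleton hF.jointSmooth hx,
    (hF.eulerHarmonic x hx).harmonic, zero_add]
  simp only [radialDeriv.eq_def (mixedDiv F), radialDeriv.eq_def (radialDeriv F), Finset.mul_sum,
    ← _root_.mixedDiv_pd2 isOpen_compl_singleton hF.jointSmooth _ hx, hF.mixedDiv_pd2 hx]
  exact Finset.sum_congr rfl fun a _ => by ring

theorem baseLapl_eq (hF : RotHarmonic κ F) (hx : x ≠ 0) (v : Evec m) :
    baseLapl F x v = 4 * (‖x‖ ^ 2)⁻¹ * (-(κ * F x v) + (‖x‖ ^ 2)⁻¹ *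
      (‖v‖ ^ 2 * radialDeriv (radialDeriv F) x v
        - (m + 2 * κ - 4) * (⟪x, v⟫ * radialDeriv F x v))) := by
  have hterm (i : Fin m) : pd1 i (pd1 i F) x v
      = 2 * (‖x‖ ^ 2)⁻¹ * (v i * pd1 i (radialDeriv F) x v - v i * pd2 i F x v
          - ⟪x, v⟫ * pd2 i (pd1 i F) x v)
        - 4 * (‖x‖ ^ 4)⁻¹ * (x i * v i * radialDeriv F x v - ⟪x, v⟫ * (x i * pd2 i F x v)) := by
    have hF' : ∀ z ∈ ({0} : Set (Evec m))ᶜ, ∀ w, pd1 i F z w = 2 * (‖z‖ ^ 2)⁻¹ *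
        (w i * radialDeriv F z w - ⟪w, z⟫ * pd2 i F z w) := fun z hz w => by
      rw [hF.pd1_eq z hz, real_inner_comm]
    rw [pd1_congr isOpen_compl_singleton hF' i hx]
    refine (((HasPdvAt.inv_norm_pow hx 2).const_mul 2).mul ((HasPdvAt.const_mul _
      (hF.jointSmooth_radialDeriv.hasPdvAt_left isOpen_compl_singleton i hx v)).sub
      ((HasPdvAt.inner_left v).mul ((hF.jointSmooth.pd2 isOpen_compl_singleton i).hasPdvAt_left
      isOpen_compl_singleton i hx v)))).2.trans ?_
    rw [hF.jointSmooth.pd1_pd2_comm isOpen_compl_singleton i i hx, real_inner_comm]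
    push_cast
    ring
  simp only [baseLapl, hterm, Finset.sum_sub_distrib, ← Finset.mul_sum, ← Finset.sum_mul]
  rw [← radialDeriv, sum_coord_mul_coord, hF.sum_mul_pd2 hx, ← tangentDeriv, ← mixedDiv,
    hF.tangentDeriv_radialDeriv hx, hF.mixedDiv_eq hx]
  ring

end RotHarmonic

section Isometry

variable {m : ℕ} {κ : ℝ} {Q : Evec m → ℝ} (A : Evec m ≃ₗᵢ[ℝ] Evec m)

theorem fderiv_comp_linearIsometryEquiv_apply (hQ : Differentiable ℝ Q) (w e : Evec m) :
    fderiv ℝ (fun v => Q (A v)) w e = fderiv ℝ Q (A w) (A e) := by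
  have hchain : HasFDerivAt (fun v => Q (A v)) _ w :=
    (hQ (A w)).hasFDerivAt.comp w A.toContinuousLinearEquiv.hasFDerivAt
  rw [hchain.fderiv]
  rfl

theorem pdv_comp_linearIsometryEquiv (hQ : Differentiable ℝ Q) (j : Fin m) (w : Evec m) :
    pdv j (fun v => Q (A v)) w = ∑ a, A (EuclideanSpace.single j 1) a * pdv a Q (A w) := by
  rw [pdv, fderiv_comp_linearIsometryEquiv_apply A hQ, ← fderiv_apply_eq_sum_pdv]

theorem sum_linearIsometryEquiv_single_mul (a b : Fin m) :
    ∑ j, A (EuclideanSpace.single j 1) a * A (EuclideanSpace.single j 1) b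
      = if a = b then 1 else 0 := by
  have := ((EuclideanSpace.basisFun (Fin m) ℝ).map A).sum_inner_mul_inner
    (EuclideanSpace.single a 1) (EuclideanSpace.single b 1)
  simpa [EuclideanSpace.inner_single_left, EuclideanSpace.inner_single_right, eq_comm] using this

theorem lapl_comp_linearIsometryEquiv (hQ : ContDiff ℝ (⊤ : ℕ∞) Q) (w : Evec m) :
    lapl (fun v => Q (A v)) w = lapl Q (A w) := by
  have hsecond (j : Fin m) : pdv j (pdv j fun v => Q (A v)) w
      = ∑ a, ∑ b, A (EuclideanSpace.single j 1) a * A (EuclideanSpace.single j 1) b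
        * pdv b (pdv a Q) (A w) := by
    rw [funext (pdv_comp_linearIsometryEquiv A (hQ.differentiable (by simp)) j)]
    have hsum : HasPdvAt j (fun w => ∑ a, A (EuclideanSpace.single j 1) a * pdv a Q (A w)) w
        (∑ a, A (EuclideanSpace.single j 1) a * pdv j (fun w => pdv a Q (A w)) w) :=
      .sum fun a _ => .const_mul _ <| .of_contDiff <|
        (contDiff_pdv hQ a).comp A.toContinuousLinearEquiv.contDiff
    rw [hsum.2]
    refine Finset.sum_congr rfl fun a _ => ?_
    rw [pdv_comp_linearIsometryEquiv A ((contDiff_pdv hQ a).differentiable (by simp)),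
      Finset.mul_sum]
    exact Finset.sum_congr rfl fun b _ => by ring
  simp only [lapl, hsecond]
  rw [Finset.sum_comm]
  refine Finset.sum_congr rfl fun a _ => ?_
  rw [Finset.sum_comm]
  simp [← Finset.sum_mul, sum_linearIsometryEquiv_single_mul]

theorem EulerHarmonic.comp_linearIsometryEquiv (hQ : EulerHarmonic κ Q) :
    EulerHarmonic κ (fun v => Q (A v)) where
  contDiff := hQ.contDiff.comp A.toContinuousLinearEquiv.contDiff
  euler w := by
    rw [← fderiv_apply_eq_sum_pdv,
      fderiv_comp_linearIsometryEquiv_apply A (hQ.contDiff.differentiable (by simp)), ← hQ.euler,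
      ← fderiv_apply_eq_sum_pdv]
  harmonic w := (lapl_comp_linearIsometryEquiv A hQ.contDiff w).trans (hQ.harmonic _)

end Isometry

section Reflection

variable {m : ℕ}

theorem reflv_eq_reflection (x : Evec m) : reflv x = (ℝ ∙ x)ᗮ.reflection := by
  ext1 v
  rw [Submodule.reflection_orthogonal_apply, Submodule.reflection_singleton_apply, reflv, neg_sub,
    ← Nat.cast_smul_eq_nsmul ℝ, smul_smul]
  congr 2
  simp [mul_div_assoc]

theorem reflv_self (x : Evec m) : reflv x x = -x := by
  rw [reflv_eq_reflection, Submodule.reflection_orthogonal_apply,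
    Submodule.reflection_mem_subspace_eq_self (Submodule.mem_span_singleton_self x)]

theorem contDiffOn_reflv :
    ContDiffOn ℝ (⊤ : ℕ∞) (fun q : Evec m × Evec m => reflv q.1 q.2) ({0}ᶜ ×ˢ Set.univ) := by
  unfold reflv
  refine contDiffOn_snd.sub (ContDiffOn.fun_smul (ContDiffOn.div ?_ ?_ ?_) contDiffOn_fst)
  · exact contDiffOn_const.mul (contDiffOn_fst.inner ℝ contDiffOn_snd)
  · exact (contDiff_fst.norm_sq ℝ).contDiffOn
  · rintro q ⟨hq, -⟩
    simpa using hq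

theorem fderiv_reflv_left_apply {x : Evec m} (hx : x ≠ 0) (v e : Evec m) :
    fderiv ℝ (fun x => reflv x v) x e
      = -(2 * (‖x‖ ^ 2)⁻¹) • (⟪e, v⟫ • x + ⟪x, v⟫ • reflv x e) := by
  have hn : ‖x‖ ^ 2 ≠ 0 := pow_ne_zero 2 (norm_ne_zero_iff.2 hx)
  have hinv : HasFDerivAt (fun x : Evec m => (‖x‖ ^ 2)⁻¹) _ x :=
    (hasDerivAt_inv hn).comp_hasFDerivAt x (hasStrictFDerivAt_norm_sq x).hasFDerivAt
  have hinner : HasFDerivAt (fun x : Evec m => ⟪v, x⟫) (innerSL ℝ v) x :=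
    (innerSL ℝ v).hasFDerivAt
  have h : HasFDerivAt (fun x => v - (2 * ⟪v, x⟫ * (‖x‖ ^ 2)⁻¹) • x) _ x :=
    (((hinner.const_mul 2).mul hinv).smul (hasFDerivAt_id x)).const_sub v
  have hfun : (fun x => reflv x v) = fun x => v - (2 * ⟪v, x⟫ * (‖x‖ ^ 2)⁻¹) • x :=
    funext fun z => by rw [reflv, real_inner_comm, div_eq_mul_inv]
  rw [hfun, h.fderiv]
  ext a
  simp only [Pi.mul_apply, neg_smul, smul_neg, id_eq, neg_add_rev, add_apply, neg_apply,
    ContinuousLinearMap.smulRight_apply, smul_apply, coe_innerSL_apply, nsmul_eq_mul,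
    Nat.cast_ofNat, smul_eq_mul, ContinuousLinearMap.id_apply, PiLp.add_apply, PiLp.neg_apply,
    PiLp.smul_apply, real_inner_comm v e, real_inner_comm v x, reflv, smul_add, PiLp.sub_apply]
  field_simp
  ring

theorem fderiv_comp_reflv_left_apply {Q : Evec m → ℝ} (hQ : Differentiable ℝ Q) {x : Evec m}
    (hx : x ≠ 0) (v e : Evec m) :
    fderiv ℝ (fun x => Q (reflv x v)) x e
      = fderiv ℝ Q (reflv x v) (fderiv ℝ (fun x => reflv x v) x e) := by
  have hreflv : DifferentiableAt ℝ (fun x => reflv x v) x :=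
    ((contDiffOn_reflv.contDiffAt ((isOpen_compl_singleton.prod isOpen_univ).mem_nhds
      ⟨Set.mem_compl_singleton_iff.2 hx, trivial⟩)).comp x
      (contDiff_id.prodMk contDiff_const).contDiffAt).differentiableAt (by simp)
  have hchain : HasFDerivAt (fun x => Q (reflv x v)) _ x :=
    (hQ (reflv x v)).hasFDerivAt.comp x hreflv.hasFDerivAt
  rw [hchain.fderiv]
  rfl

theorem fderiv_comp_reflv_right_apply {Q : Evec m → ℝ} (hQ : Differentiable ℝ Q)
    (x v e : Evec m) :
    fderiv ℝ (fun v => Q (reflv x v)) v e = fderiv ℝ Q (reflv x v) (reflv x e) := by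
  simpa only [reflv_eq_reflection] using
    fderiv_comp_linearIsometryEquiv_apply (ℝ ∙ x)ᗮ.reflection hQ v e

theorem EulerHarmonic.rotHarmonic {κ : ℝ} {Q : Evec m → ℝ} (hQ : EulerHarmonic κ Q) :
    RotHarmonic κ (fun x v => Q (reflv x v)) where
  jointSmooth := hQ.contDiff.comp_contDiffOn contDiffOn_reflv
  eulerHarmonic x _ := by
    simpa only [reflv_eq_reflection] using hQ.comp_linearIsometryEquiv (ℝ ∙ x)ᗮ.reflection
  pd1_eq x hx v i := by
    have hQd : Differentiable ℝ Q := hQ.contDiff.differentiable (by simp)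
    have hradial : radialDeriv (fun x v => Q (reflv x v)) x v = -fderiv ℝ Q (reflv x v) x :=
      (fderiv_apply_eq_sum_pdv _ v x).symm.trans <| by
        rw [fderiv_comp_reflv_right_apply hQd, reflv_self, map_neg]
    rw [hradial, pd1, pd2, fderiv_comp_reflv_left_apply hQd hx, fderiv_comp_reflv_right_apply hQd,
      fderiv_reflv_left_apply hx]
    simp only [EuclideanSpace.inner_single_left, Real.ringHom_apply, one_mul, smul_add, neg_smul,
      map_add, map_neg, map_smul, smul_eq_mul, mul_neg]
    ring

end Reflection

section CoordMulInvNormPow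

variable {m : ℕ} {x : Evec m}

theorem HasPdvAt.coord_mul_inv_norm_pow (hx : x ≠ 0) (N : ℕ) (i l : Fin m) :
    HasPdvAt i (fun x => x l * (‖x‖ ^ N)⁻¹) x
      ((if i = l then 1 else 0) * (‖x‖ ^ N)⁻¹ - N * (x i * (x l * (‖x‖ ^ (N + 2))⁻¹))) :=
  ((HasPdvAt.coord l).mul (HasPdvAt.inv_norm_pow hx N)).congr_val (by ring)

theorem contDiffOn_coord_mul_inv_norm_pow (N : ℕ) (l : Fin m) :
    ContDiffOn ℝ (⊤ : ℕ∞) (fun x : Evec m => x l * (‖x‖ ^ N)⁻¹) {0}ᶜ :=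
  (contDiff_coord l).contDiffOn.mul (contDiffOn_inv_norm_pow N)

theorem sum_mul_pdv_inv_norm_pow (hx : x ≠ 0) (N : ℕ) (φ : Fin m → ℝ) :
    ∑ i, φ i * pdv i (fun x => (‖x‖ ^ N)⁻¹) x
      = -(N * (‖x‖ ^ (N + 2))⁻¹ * ∑ i, x i * φ i) := by
  simp only [(HasPdvAt.inv_norm_pow hx N).2, Finset.mul_sum, ← Finset.sum_neg_distrib]
  exact Finset.sum_congr rfl fun i _ => by ring

theorem sum_mul_pdv_coord_mul_inv_norm_pow (hx : x ≠ 0) (N : ℕ) (l : Fin m) (φ : Fin m → ℝ) :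
    ∑ i, φ i * pdv i (fun x => x l * (‖x‖ ^ N)⁻¹) x
      = (‖x‖ ^ N)⁻¹ * φ l - N * (x l * (‖x‖ ^ (N + 2))⁻¹) * ∑ i, x i * φ i := by
  simp only [(HasPdvAt.coord_mul_inv_norm_pow hx N _ l).2, mul_sub, Finset.sum_sub_distrib,
    Finset.mul_sum]
  congr 1
  · simp [mul_comm]
  · exact Finset.sum_congr rfl fun i _ => by ring

theorem lapl_coord_mul_inv_norm_pow (hx : x ≠ 0) (N : ℕ) (l : Fin m) :
    lapl (fun x => x l * (‖x‖ ^ N)⁻¹) x = N * (N - m) * (x l * (‖x‖ ^ (N + 2))⁻¹) := by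
  have hpdv (i : Fin m) : pdv i (pdv i fun x => x l * (‖x‖ ^ N)⁻¹) x
      = pdv i (fun x => (if i = l then 1 else 0) * (‖x‖ ^ N)⁻¹
          - N * (x i * (x l * (‖x‖ ^ (N + 2))⁻¹))) x := by
    have : pdv i (fun x => x l * (‖x‖ ^ N)⁻¹) =ᶠ[𝓝 x] fun x =>
        (if i = l then 1 else 0) * (‖x‖ ^ N)⁻¹ - N * (x i * (x l * (‖x‖ ^ (N + 2))⁻¹)) := by
      filter_upwards [isOpen_ne.mem_nhds hx] with z hz
        using (HasPdvAt.coord_mul_inv_norm_pow hz N i l).2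
    rw [pdv, this.fderiv_eq, pdv]
  have hterm (i : Fin m) : pdv i (pdv i fun x => x l * (‖x‖ ^ N)⁻¹) x
      = -(N * (x l * (‖x‖ ^ (N + 2))⁻¹)) - 2 * N * (‖x‖ ^ (N + 2))⁻¹ * (if i = l then x i else 0)
        + N * (N + 2) * (x l * (‖x‖ ^ (N + 4))⁻¹) * (x i * x i) := by
    rw [hpdv, (((HasPdvAt.inv_norm_pow hx N).const_mul _).sub (((HasPdvAt.coord i).mul
      (HasPdvAt.coord_mul_inv_norm_pow hx (N + 2) i l)).const_mul _)).2]
    simp only [if_true]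
    split_ifs <;> push_cast <;> ring
  simp only [lapl, hterm, Finset.sum_add_distrib, Finset.sum_sub_distrib, ← Finset.mul_sum,
    sum_coord_sq, Finset.sum_const, Finset.card_univ, Fintype.card_fin, Finset.sum_ite_eq',
    Finset.mem_univ, if_true, nsmul_eq_mul]
  have := norm_ne_zero_iff.2 hx
  field_simp
  ring

end CoordMulInvNormPow

namespace RotHarmonic

variable {m : ℕ} {κ : ℝ} {F : Evec m → Evec m → ℝ} {x : Evec m}

theorem baseLapl_coord_mul (hF : RotHarmonic κ F) (hx : x ≠ 0) (v : Evec m) (l : Fin m) :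
    baseLapl (fun x v => x l * (‖x‖ ^ m)⁻¹ * F x v) x v
      = 4 * (‖x‖ ^ 2)⁻¹ * (‖x‖ ^ m)⁻¹ * (v l * radialDeriv F x v - ⟪x, v⟫ * pd2 l F x v
        + x l * (-(κ * F x v) + (‖x‖ ^ 2)⁻¹ * (‖v‖ ^ 2 * radialDeriv (radialDeriv F) x v
          - (m + 2 * κ - 4) * (⟪x, v⟫ * radialDeriv F x v)))) := by
  rw [baseLapl_mul_left isOpen_compl_singleton (contDiffOn_coord_mul_inv_norm_pow m l)
    hF.jointSmooth hx, lapl_coord_mul_inv_norm_pow hx, sum_mul_pdv_coord_mul_inv_norm_pow hx,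
    hF.sum_mul_pd1 hx, hF.pd1_eq x hx, hF.baseLapl_eq hx]
  ring

theorem mixedDiv_coord_mul (hF : RotHarmonic κ F) (hx : x ≠ 0) (v : Evec m) (l : Fin m) :
    mixedDiv (fun x v => x l * (‖x‖ ^ m)⁻¹ * F x v) x v
      = (‖x‖ ^ m)⁻¹ * pd2 l F x v
        + (m + 2 * κ - 4) * (x l * (‖x‖ ^ (m + 2))⁻¹ * radialDeriv F x v) := by
  rw [mixedDiv_mul_left isOpen_compl_singleton (contDiffOn_coord_mul_inv_norm_pow m l)
    hF.jointSmooth hx, sum_mul_pdv_coord_mul_inv_norm_pow hx, ← radialDeriv, hF.mixedDiv_eq hx,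
    pow_add, mul_inv]
  ring

theorem tangentDeriv_mixedDiv_coord_mul (hF : RotHarmonic κ F) (hx : x ≠ 0) (v : Evec m)
    (l : Fin m) :
    tangentDeriv (mixedDiv fun x v => x l * (‖x‖ ^ m)⁻¹ * F x v) x v
      = (m + 2 * κ - 2) * (‖x‖ ^ 2)⁻¹ * (‖x‖ ^ m)⁻¹ * (v l * radialDeriv F x v
          - ⟪x, v⟫ * pd2 l F x v - κ * (x l * F x v)
          - (m + 2 * κ - 4) * (‖x‖ ^ 2)⁻¹ * (x l * (⟪x, v⟫ * radialDeriv F x v)))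
        + 2 * (‖x‖ ^ 2)⁻¹ * (‖x‖ ^ m)⁻¹ * ‖v‖ ^ 2 * (pd2 l (radialDeriv F) x v
          + (m + 2 * κ - 4) * (‖x‖ ^ 2)⁻¹ * (x l * radialDeriv (radialDeriv F) x v)) := by
  have hU : IsOpen ({0}ᶜ : Set (Evec m)) := isOpen_compl_singleton
  have hl := hF.jointSmooth.pd2 hU l
  rw [tangentDeriv_congr hU (fun z hz w => hF.mixedDiv_coord_mul hz w l) hx,
    tangentDeriv_add_const_mul hU (hl.mul_left (contDiffOn_inv_norm_pow m))
      (hF.jointSmooth_radialDeriv.mul_left (contDiffOn_coord_mul_inv_norm_pow (m + 2) l)) _ hx,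
    tangentDeriv_mul_left hU (contDiffOn_inv_norm_pow m) hl hx, sum_mul_pdv_inv_norm_pow hx,
    tangentDeriv_mul_left hU (contDiffOn_coord_mul_inv_norm_pow (m + 2) l)
      hF.jointSmooth_radialDeriv hx, sum_mul_pdv_coord_mul_inv_norm_pow hx, sum_coord_mul_coord,
    hF.tangentDeriv_pd2 hx, hF.tangentDeriv_radialDeriv hx]
  simp only [pow_add, mul_inv]
  push_cast
  ring

theorem mixedDiv_mixedDiv_coord_mul (hF : RotHarmonic κ F) (hx : x ≠ 0) (v : Evec m)
    (l : Fin m) :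
    mixedDiv (mixedDiv fun x v => x l * (‖x‖ ^ m)⁻¹ * F x v) x v
      = (m + 2 * κ - 4) * (‖x‖ ^ 2)⁻¹ * (‖x‖ ^ m)⁻¹ * (2 * pd2 l (radialDeriv F) x v
        + (m + 2 * κ - 6) * (‖x‖ ^ 2)⁻¹ * (x l * radialDeriv (radialDeriv F) x v)) := by
  have hU : IsOpen ({0}ᶜ : Set (Evec m)) := isOpen_compl_singleton
  have hl := hF.jointSmooth.pd2 hU l
  have hradial : ∑ j, x j * pd2 j (pd2 l F) x v = pd2 l (radialDeriv F) x v :=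
    (hF.pd2_radialDeriv hx v l).symm
  rw [mixedDiv_congr hU (fun z hz w => hF.mixedDiv_coord_mul hz w l) hx,
    mixedDiv_add_const_mul hU (hl.mul_left (contDiffOn_inv_norm_pow m))
      (hF.jointSmooth_radialDeriv.mul_left (contDiffOn_coord_mul_inv_norm_pow (m + 2) l)) _ hx,
    mixedDiv_mul_left hU (contDiffOn_inv_norm_pow m) hl hx, sum_mul_pdv_inv_norm_pow hx,
    mixedDiv_mul_left hU (contDiffOn_coord_mul_inv_norm_pow (m + 2) l)
      hF.jointSmooth_radialDeriv hx, sum_mul_pdv_coord_mul_inv_norm_pow hx, hradial,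
    hF.mixedDiv_pd2 hx, hF.mixedDiv_radialDeriv hx, ← radialDeriv]
  simp only [pow_add, mul_inv]
  push_cast
  ring

theorem Dk_coord_mul {k : ℕ} (hF : RotHarmonic k F) (hmk : 4 < m + 2 * k) (hx : x ≠ 0)
    (v : Evec m) (l : Fin m) :
    Dk m k (fun x v => x l * (‖x‖ ^ m)⁻¹ * F x v) x v = 0 := by
  have hmk' : (4 : ℝ) < m + 2 * k := by exact_mod_cast hmk
  obtain ⟨n, hn⟩ : ∃ n : ℝ, n = m + 2 * k - 4 := ⟨_, rfl⟩
  have h2 : (m : ℝ) + 2 * k - 2 = n + 2 := by linarith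
  have h6 : (m : ℝ) + 2 * k - 6 = n - 2 := by linarith
  have hn0 : n ≠ 0 := by linarith
  have hn2 : n + 2 ≠ 0 := by linarith
  rw [Dk_eq isOpen_compl_singleton
    (hF.jointSmooth.mul_left (contDiffOn_coord_mul_inv_norm_pow m l)) k hx,
    hF.baseLapl_coord_mul hx, hF.tangentDeriv_mixedDiv_coord_mul hx,
    hF.mixedDiv_mixedDiv_coord_mul hx, h2, h6, ← hn]
  field_simp
  ring

end RotHarmonic

section Laplacian

variable {m : ℕ} {p q : Evec m → ℝ}

theorem lapl_add (hp : ContDiff ℝ (⊤ : ℕ∞) p) (hq : ContDiff ℝ (⊤ : ℕ∞) q) (x : Evec m) :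
    lapl (p + q) x = lapl p x + lapl q x := by
  have hpdv {f g : Evec m → ℝ} (hf : ContDiff ℝ (⊤ : ℕ∞) f) (hg : ContDiff ℝ (⊤ : ℕ∞) g)
      (i : Fin m) : pdv i (f + g) = pdv i f + pdv i g :=
    funext fun _ => ((HasPdvAt.of_contDiff hf).add (.of_contDiff hg)).2
  simp only [lapl, hpdv hp hq, hpdv (contDiff_pdv hp _) (contDiff_pdv hq _), Pi.add_apply,
    Finset.sum_add_distrib]

theorem lapl_const_smul (hp : ContDiff ℝ (⊤ : ℕ∞) p) (c : ℝ) (x : Evec m) :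
    lapl (c • p) x = c * lapl p x := by
  have hpdv {f : Evec m → ℝ} (hf : ContDiff ℝ (⊤ : ℕ∞) f) (i : Fin m) :
      pdv i (c • f) = c • pdv i f :=
    funext fun _ => ((HasPdvAt.of_contDiff hf).const_mul c).2
  simp only [lapl, hpdv hp, hpdv (contDiff_pdv hp _), Pi.smul_apply, smul_eq_mul, Finset.mul_sum]

end Laplacian

section HarmonicPolynomials

variable {m k : ℕ} {p : Evec m → ℝ}

theorem IsHk.contDiff (hp : IsHk m k p) : ContDiff ℝ (⊤ : ℕ∞) p := by
  obtain ⟨⟨P, hP⟩, -, -⟩ := hp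
  rw [funext hP]
  simp only [MvPolynomial.eval_eq]
  exact ContDiff.sum fun e _ => contDiff_const.mul
    (contDiff_prod fun i _ => (contDiff_coord i).pow (e i))

theorem IsHk.eulerHarmonic (hp : IsHk m k p) : EulerHarmonic k p where
  contDiff := hp.contDiff
  euler w := by
    have hchain : HasDerivAt (fun c : ℝ => p (c • w)) (fderiv ℝ p w w) 1 := by
      simpa [Function.comp_def] using
        (hp.contDiff.differentiable (by simp) ((1 : ℝ) • w)).hasFDerivAt.comp_hasDerivAt (1 : ℝ)
          ((hasDerivAt_id (1 : ℝ)).smul_const w)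
    have hpow : HasDerivAt (fun c : ℝ => p (c • w)) (k * p w) 1 := by
      simpa [hp.2.1] using (hasDerivAt_pow k (1 : ℝ)).mul_const (p w)
    rw [← fderiv_apply_eq_sum_pdv, hchain.unique hpow]
  harmonic := hp.2.2

theorem IsHk.comp_linearIsometryEquiv (hp : IsHk m k p) (A : Evec m ≃ₗᵢ[ℝ] Evec m) :
    IsHk m k (fun v => p (A v)) := by
  refine ⟨?_, fun c x => by simp only [map_smul, hp.2.1],
    (hp.eulerHarmonic.comp_linearIsometryEquiv A).harmonic⟩
  obtain ⟨P, hP⟩ := hp.1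
  refine ⟨MvPolynomial.bind₁ (fun i => ∑ j, MvPolynomial.C (A (EuclideanSpace.single j 1) i)
    * MvPolynomial.X j) P, fun x => ?_⟩
  simp only [hP]
  rw [MvPolynomial.eval, MvPolynomial.eval, MvPolynomial.eval₂Hom_bind₁]
  congr 2
  ext i
  conv_lhs => rw [← (EuclideanSpace.basisFun (Fin m) ℝ).sum_repr x]
  simp [mul_comm]

theorem IsHk.comp_reflv (hp : IsHk m k p) (a : Evec m) : IsHk m k (fun v => p (reflv a v)) := by
  simpa only [reflv_eq_reflection] using hp.comp_linearIsometryEquiv (ℝ ∙ a)ᗮ.reflection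

theorem IsHk.eq_zero_of_eqOn_closedBall (hp : IsHk m k p)
    (h : ∀ u ∈ closedBall (0 : Evec m) 1, p u = 0) : p = 0 := by
  ext x
  have hpos : 0 < ‖x‖ + 1 := by positivity
  have hball : (‖x‖ + 1)⁻¹ • x ∈ closedBall (0 : Evec m) 1 := by
    rw [mem_closedBall_zero_iff, norm_smul, norm_inv, Real.norm_of_nonneg hpos.le,
      inv_mul_le_one₀ hpos]
    linarith
  rw [← smul_inv_smul₀ hpos.ne' x, hp.2.1, h _ hball, mul_zero, Pi.zero_apply]

variable (m k) in
/-- The predicate `IsHk m k`, i.e. the space `ℋ_k`, as a subspace of the space of all functions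
on `ℝ^m`. -/
def harmPoly : Submodule ℝ (Evec m → ℝ) where
  carrier := {p | IsHk m k p}
  zero_mem' := ⟨⟨0, by simp⟩, by simp, fun x => by
    simpa using lapl_const_smul (contDiff_const (c := (0 : ℝ))) 0 x⟩
  add_mem' := by
    intro p q hp hq
    refine ⟨?_, fun c x => by simp [hp.2.1, hq.2.1, mul_add], fun x => by
      rw [lapl_add hp.contDiff hq.contDiff, hp.2.2, hq.2.2, add_zero]⟩
    obtain ⟨⟨P, hP⟩, -⟩ := hp
    obtain ⟨⟨Q, hQ⟩, -⟩ := hq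
    exact ⟨P + Q, fun x => by simp [hP, hQ]⟩
  smul_mem' := by
    intro a p hp
    refine ⟨?_, fun c x => by simp [hp.2.1, mul_left_comm], fun x => by
      rw [lapl_const_smul hp.contDiff, hp.2.2, mul_zero]⟩
    obtain ⟨⟨P, hP⟩, -⟩ := hp
    exact ⟨a • P, fun x => by simp [hP]⟩

theorem eval_const_mul_of_isHomogeneous {σ R : Type*} [CommSemiring R] {P : MvPolynomial σ R}
    {n : ℕ} (hP : P.IsHomogeneous n) (c : R) (x : σ → R) :
    MvPolynomial.eval (fun i => c * x i) P = c ^ n * MvPolynomial.eval x P := by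
  rw [MvPolynomial.eval_eq, MvPolynomial.eval_eq, Finset.mul_sum]
  refine Finset.sum_congr rfl fun e he => ?_
  have hdeg : ∑ i ∈ e.support, e i = n := by
    rw [← hP (MvPolynomial.mem_support_iff.1 he), Finsupp.weight_apply]
    simp [Finsupp.sum]
  simp only [mul_pow, Finset.prod_mul_distrib, Finset.prod_pow_eq_pow_sum, hdeg]
  ring

theorem eval_homogeneousComponent_of_forall_eval_mul {σ R : Type*} [CommRing R] [IsDomain R]
    [Infinite R] {P : MvPolynomial σ R} {n : ℕ} {x : σ → R}
    (hP : ∀ c, MvPolynomial.eval (fun i => c * x i) P = c ^ n * MvPolynomial.eval x P) :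
    MvPolynomial.eval x (MvPolynomial.homogeneousComponent n P) = MvPolynomial.eval x P := by
  have hpoly : ∑ i ∈ Finset.range (P.totalDegree + 1), Polynomial.C (MvPolynomial.eval x
      (MvPolynomial.homogeneousComponent i P)) * Polynomial.X ^ i
      = Polynomial.C (MvPolynomial.eval x P) * Polynomial.X ^ n := by
    refine Polynomial.funext fun c => ?_
    have hc := hP c
    conv_lhs at hc => rw [← MvPolynomial.sum_homogeneousComponent P]
    simp only [map_sum, eval_const_mul_of_isHomogeneous
      (MvPolynomial.homogeneousComponent_isHomogeneous _ P)] at hc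
    simpa only [Polynomial.eval_finsetSum, Polynomial.eval_mul, Polynomial.eval_C,
      Polynomial.eval_pow, Polynomial.eval_X, mul_comm] using hc
  have hcoeff := congrArg (Polynomial.coeff · n) hpoly
  simp only [Polynomial.finsetSum_coeff, Polynomial.coeff_C_mul_X_pow, if_true,
    Finset.sum_ite_eq, Finset.mem_range] at hcoeff
  rw [← hcoeff]
  split_ifs with hn
  · rfl
  · rw [MvPolynomial.homogeneousComponent_eq_zero _ _ (by lia), map_zero]

instance : FiniteDimensional ℝ (harmPoly m k) := by
  let ev : MvPolynomial (Fin m) ℝ →ₗ[ℝ] (Evec m → ℝ) :=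
    LinearMap.pi fun x => (MvPolynomial.aeval x).toLinearMap
  have hle : harmPoly m k ≤ (MvPolynomial.homogeneousSubmodule (Fin m) ℝ k).map ev := by
    rintro p ⟨⟨P, hP⟩, hp, -⟩
    refine ⟨MvPolynomial.homogeneousComponent k P,
      MvPolynomial.homogeneousComponent_isHomogeneous k P, funext fun x => ?_⟩
    have hhom (c : ℝ) : MvPolynomial.eval (fun i => c * x i) P
        = c ^ k * MvPolynomial.eval (fun i => x i) P := by
      rw [← hP, ← hp, hP]
      rfl
    rw [hP, ← eval_homogeneousComponent_of_forall_eval_mul hhom]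
    rfl
  have : FiniteDimensional ℝ (MvPolynomial.homogeneousSubmodule (Fin m) ℝ k) :=
    Module.Finite.iff_fg.2 (MvPolynomial.homogeneousSubmodule_fg _ _ k)
  exact Submodule.finiteDimensional_of_le hle

end HarmonicPolynomials

section Interpolation

theorem exists_lagrange_interpolation {K X : Type*} [Field K] (V : Submodule K (X → K))
    [FiniteDimensional K V] {S : Set X} (hS : ∀ q ∈ V, (∀ u ∈ S, q u = 0) → q = 0) :
    ∃ (N : ℕ) (u : Fin N → X) (p : Fin N → X → K), (∀ i, u i ∈ S) ∧ (∀ i, p i ∈ V) ∧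
      ∀ q ∈ V, ∀ v, q v = ∑ i, q (u i) * p i v := by
  let ev (x : X) : Module.Dual K V := (LinearMap.proj x).comp V.subtype
  have hspan : Submodule.span K (ev '' S) = ⊤ := by
    refine Submodule.span_eq_top_of_ne_zero fun q hq => ?_
    contrapose! hq
    exact Subtype.ext (hS q q.2 fun u hu => hq (ev u) ⟨u, hu, rfl⟩)
  let b₀ := Module.Basis.ofSpan hspan.ge
  let _ := FiniteDimensional.fintypeBasisIndex b₀
  let b := b₀.reindex (Fintype.equivFin _)
  have hb (i) : b i ∈ ev '' S :=
    Module.Basis.ofSpan_subset hspan.ge ⟨_, (b₀.reindex_apply _ i).symm⟩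
  choose u hu hub using hb
  -- Finite-dimensional spaces are reflexive, so the coordinates of `ev v` lie in `V`.
  refine ⟨_, u, fun i => ((Module.evalEquiv K V).symm (b.coord i) : V), hu,
    fun i => Subtype.coe_prop _, fun q hq v => ?_⟩
  have hcoord (i) : ((Module.evalEquiv K V).symm (b.coord i) : X → K) v = b.repr (ev v) i :=
    Module.apply_evalEquiv_symm_apply K V (ev v) (b.coord i)
  calc q v = (∑ i, b.repr (ev v) i • b i) ⟨q, hq⟩ := by rw [b.sum_repr]; rfl
    _ = _ := by
      simp only [hcoord, ← hub, LinearMap.sum_apply, LinearMap.smul_apply, smul_eq_mul]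
      exact Finset.sum_congr rfl fun i _ => mul_comm _ _

theorem exists_lagrange_interpolation_isHk (m k : ℕ) :
    ∃ (N : ℕ) (u : Fin N → Evec m) (r : Fin N → Evec m → ℝ),
      (∀ i, u i ∈ closedBall 0 1) ∧ (∀ i, IsHk m k (r i)) ∧
        ∀ q, IsHk m k q → ∀ v, q v = ∑ i, q (u i) * r i v :=
  exists_lagrange_interpolation (harmPoly m k) fun _ hq => IsHk.eq_zero_of_eqOn_closedBall hq

end Interpolation

section BosonicLaplacian

variable {m : ℕ} {U : Set (Evec m)} {ι : Type*} {s : Finset ι} {x : Evec m}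

theorem Dk_congr (hU : IsOpen U) (k : ℕ) {f g : Evec m → Evec m → ℝ}
    (h : ∀ x ∈ U, ∀ v, g x v = f x v) (hx : x ∈ U) (v : Evec m) :
    Dk m k g x v = Dk m k f x v := by
  have hmixed (j : Fin m) : ∀ x ∈ U, ∀ v, pd2 j (pd1 j g) x v = pd2 j (pd1 j f) x v :=
    fun z hz => pd2_eq_pdv (pd1_congr hU h j hz) j
  have hthird (i j : Fin m) (v : Evec m) :
      pd2 i (pd1 i (pd2 j (pd1 j g))) x v = pd2 i (pd1 i (pd2 j (pd1 j f))) x v :=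
    pd2_eq_pdv (pd1_congr hU (hmixed j) i hx) i v
  simp only [Dk, pd1_congr hU (fun _ hz => pd1_congr hU h _ hz) _ hx, hthird,
    pd1_congr hU (hmixed _) _ hx]

theorem pd1_sum (hU : IsOpen U) {f : ι → Evec m → Evec m → ℝ}
    (hf : ∀ a ∈ s, JointSmooth U (f a)) (i : Fin m) (hx : x ∈ U) (v : Evec m) :
    pd1 i (fun x v => ∑ a ∈ s, f a x v) x v = ∑ a ∈ s, pd1 i (f a) x v :=
  (HasPdvAt.sum fun a ha => (hf a ha).hasPdvAt_left hU i hx v).2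

theorem pd2_sum {f : ι → Evec m → Evec m → ℝ} (hf : ∀ a ∈ s, JointSmooth U (f a)) (i : Fin m)
    (hx : x ∈ U) (v : Evec m) :
    pd2 i (fun x v => ∑ a ∈ s, f a x v) x v = ∑ a ∈ s, pd2 i (f a) x v :=
  (HasPdvAt.sum fun a ha => (hf a ha).hasPdvAt_right i hx v).2

theorem Dk_sum (hU : IsOpen U) (k : ℕ) {f : ι → Evec m → Evec m → ℝ}
    (hf : ∀ a ∈ s, JointSmooth U (f a)) (hx : x ∈ U) (v : Evec m) :
    Dk m k (fun x v => ∑ a ∈ s, f a x v) x v = ∑ a ∈ s, Dk m k (f a) x v := by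
  have hf₁ (i : Fin m) : ∀ a ∈ s, JointSmooth U (pd1 i (f a)) := fun a ha => (hf a ha).pd1 hU i
  have hf₂ (j : Fin m) : ∀ a ∈ s, JointSmooth U (pd2 j (pd1 j (f a))) := fun a ha =>
    (hf₁ j a ha).pd2 hU j
  have h₁ (i : Fin m) : pd1 i (pd1 i fun x v => ∑ a ∈ s, f a x v) x v
      = ∑ a ∈ s, pd1 i (pd1 i (f a)) x v :=
    (pd1_congr hU (fun z hz => pd1_sum hU hf i hz) i hx v).trans (pd1_sum hU (hf₁ i) i hx v)
  have h₂ (j : Fin m) : ∀ z ∈ U, ∀ v, pd2 j (pd1 j fun x v => ∑ a ∈ s, f a x v) z v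
      = ∑ a ∈ s, pd2 j (pd1 j (f a)) z v := fun z hz v =>
    (pd2_eq_pdv (pd1_sum hU hf j hz) j v).trans (pd2_sum (hf₁ j) j hz v)
  have h₃ (i j : Fin m) (v : Evec m) : pd1 i (pd2 j (pd1 j fun x v => ∑ a ∈ s, f a x v)) x v
      = ∑ a ∈ s, pd1 i (pd2 j (pd1 j (f a))) x v :=
    (pd1_congr hU (h₂ j) i hx v).trans (pd1_sum hU (hf₂ j) i hx v)
  have h₄ (i j : Fin m) : pd2 i (pd1 i (pd2 j (pd1 j fun x v => ∑ a ∈ s, f a x v))) x v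
      = ∑ a ∈ s, pd2 i (pd1 i (pd2 j (pd1 j (f a)))) x v :=
    (pd2_eq_pdv (h₃ i j) i v).trans (pd2_sum (fun a ha => (hf₂ j a ha).pd1 hU i) i hx v)
  simp only [Dk, h₁, h₃, h₄, Finset.mul_sum, Finset.sum_add_distrib, Finset.sum_sub_distrib]
  simp only [Finset.sum_comm (s := s)]

/-- The coefficient of `∂_{x_i} ∂_{x_j}` in the bosonic Laplacian `𝒟_k`, a differential operator in
the fibre variable, applied to `p`. -/
def bosonicSymbol {m : ℕ} (k : ℕ) (i j : Fin m) (p : Evec m → ℝ) (v : Evec m) : ℝ :=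
  (if i = j then p v else 0) - 4 / ((m : ℝ) + 2 * k - 2) * (v i * pdv j p v)
    + 4 * ‖v‖ ^ 2 / (((m : ℝ) + 2 * k - 2) * ((m : ℝ) + 2 * k - 4)) * pdv i (pdv j p) v

section Tensor

variable {h p : Evec m → ℝ}

theorem JointSmooth.tensor (hh : ContDiffOn ℝ (⊤ : ℕ∞) h U) (hp : ContDiff ℝ (⊤ : ℕ∞) p) :
    JointSmooth U (fun x v => h x * p v) :=
  (hh.comp contDiffOn_fst fun _ hq => hq.1).mul (hp.comp contDiff_snd).contDiffOn

theorem pd1_tensor (hU : IsOpen U) (hh : ContDiffOn ℝ (⊤ : ℕ∞) h U) (p : Evec m → ℝ) (i : Fin m)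
    (hx : x ∈ U) (v : Evec m) : pd1 i (fun x v => h x * p v) x v = pdv i h x * p v :=
  (((HasPdvAt.of_differentiableAt ((hh.contDiffAt (hU.mem_nhds hx)).differentiableAt
    (by simp))).mul (HasPdvAt.const (p v))).congr_val (by simp)).2

theorem pd2_tensor (h : Evec m → ℝ) (hp : ContDiff ℝ (⊤ : ℕ∞) p) (i : Fin m) (x v : Evec m) :
    pd2 i (fun x v => h x * p v) x v = h x * pdv i p v :=
  ((HasPdvAt.of_contDiff hp).const_mul (h x)).2

theorem Dk_tensor (hU : IsOpen U) (k : ℕ) (hh : ContDiffOn ℝ (⊤ : ℕ∞) h U)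
    (hp : ContDiff ℝ (⊤ : ℕ∞) p) (hx : x ∈ U) (v : Evec m) :
    Dk m k (fun x v => h x * p v) x v
      = ∑ i, ∑ j, pdv i (pdv j h) x * bosonicSymbol k i j p v := by
  have h₁ (i : Fin m) : pd1 i (pd1 i fun x v => h x * p v) x v = pdv i (pdv i h) x * p v :=
    (pd1_congr hU (fun z hz => pd1_tensor hU hh p i hz) i hx v).trans
      (pd1_tensor hU (contDiffOn_pdv hU hh i) p i hx v)
  have h₂ (j : Fin m) : ∀ z ∈ U, ∀ v, pd2 j (pd1 j fun x v => h x * p v) z v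
      = pdv j h z * pdv j p v := fun z hz v =>
    (pd2_eq_pdv (pd1_tensor hU hh p j hz) j v).trans (pd2_tensor (pdv j h) hp j z v)
  have h₃ (i j : Fin m) (v : Evec m) : pd1 i (pd2 j (pd1 j fun x v => h x * p v)) x v
      = pdv i (pdv j h) x * pdv j p v :=
    (pd1_congr hU (h₂ j) i hx v).trans (pd1_tensor hU (contDiffOn_pdv hU hh j) _ i hx v)
  have h₄ (i j : Fin m) : pd2 i (pd1 i (pd2 j (pd1 j fun x v => h x * p v))) x v
      = pdv i (pdv j h) x * pdv i (pdv j p) v :=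
    (pd2_eq_pdv (h₃ i j) i v).trans (pd2_tensor _ (contDiff_pdv hp j) i x v)
  simp only [Dk, h₁, h₃, h₄, bosonicSymbol, mul_add, mul_sub, Finset.sum_add_distrib,
    Finset.sum_sub_distrib, mul_ite, mul_zero, Finset.sum_ite_eq, Finset.mem_univ, if_true,
    Finset.mul_sum]
  simp only [mul_left_comm]

theorem Dk_sum_tensor (hU : IsOpen U) (k : ℕ) {h p : ι → Evec m → ℝ}
    (hh : ∀ a ∈ s, ContDiffOn ℝ (⊤ : ℕ∞) (h a) U) (hp : ∀ a ∈ s, ContDiff ℝ (⊤ : ℕ∞) (p a))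
    (hx : x ∈ U) (v : Evec m) :
    Dk m k (fun x v => ∑ a ∈ s, h a x * p a v) x v
      = ∑ a ∈ s, ∑ i, ∑ j, pdv i (pdv j (h a)) x * bosonicSymbol k i j (p a) v :=
  (Dk_sum hU k (fun a ha => .tensor (hh a ha) (hp a ha)) hx v).trans <|
    Finset.sum_congr rfl fun a ha => Dk_tensor hU k (hh a ha) (hp a ha) hx v

end Tensor

end BosonicLaplacian

section HalfSpace

variable {d : ℕ}

theorem upP_castSucc (x' : Evec d) (y : ℝ) (i : Fin d) : upP d x' y i.castSucc = x' i := by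
  simp [upP]

theorem upP_last (x' : Evec d) (y : ℝ) : upP d x' y (Fin.last d) = y := by
  simp [upP]

theorem lastP_upP (x' : Evec d) (y : ℝ) : lastP d (upP d x' y) = y := upP_last x' y

theorem downP_upP (x' : Evec d) (y : ℝ) : downP d (upP d x' y) = x' := by
  ext i
  simp [downP, upP_castSucc]

theorem upP_downP_lastP (x : Evec (d + 1)) : upP d (downP d x) (lastP d x) = x := by
  ext i
  refine Fin.lastCases ?_ (fun i => ?_) i
  · rw [upP_last, lastP]
  · rw [upP_castSucc]; simp [downP]

theorem upP_sub_upP (x' t' : Evec d) (y s : ℝ) :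
    upP d x' y - upP d t' s = upP d (x' - t') (y - s) := by
  ext i
  refine Fin.lastCases ?_ (fun i => ?_) i
  · simp [upP_last]
  · simp [upP_castSucc]

theorem smul_upP (c : ℝ) (x' : Evec d) (y : ℝ) : c • upP d x' y = upP d (c • x') (c * y) := by
  ext i
  refine Fin.lastCases ?_ (fun i => ?_) i
  · simp [upP_last]
  · simp [upP_castSucc]

theorem norm_upP_sq (x' : Evec d) (y : ℝ) : ‖upP d x' y‖ ^ 2 = ‖x'‖ ^ 2 + y ^ 2 := by
  simp only [EuclideanSpace.real_norm_sq_eq]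
  rw [Fin.sum_univ_castSucc]
  simp [upP_last, upP_castSucc]

theorem contDiff_upP :
    ContDiff ℝ (⊤ : ℕ∞) (fun q : Evec d × ℝ => upP d q.1 q.2) := by
  rw [contDiff_euclidean]
  refine Fin.lastCases ?_ fun i => ?_
  · simpa only [upP_last] using contDiff_snd
  · simpa only [upP_castSucc, Function.comp_def] using (contDiff_coord i).comp contDiff_fst

theorem continuous_upP_zero : Continuous fun t' : Evec d => upP d t' 0 :=
  contDiff_upP.continuous.comp (continuous_id.prodMk continuous_const)

theorem lastP_sub (x z : Evec (d + 1)) : lastP d (x - z) = lastP d x - lastP d z := rfl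

theorem lastP_sub_upP_zero (x : Evec (d + 1)) (t' : Evec d) :
    lastP d (x - upP d t' 0) = lastP d x := by
  rw [lastP_sub, lastP_upP, sub_zero]

theorem abs_lastP_le (x : Evec (d + 1)) : |lastP d x| ≤ ‖x‖ :=
  PiLp.norm_apply_le x (Fin.last d)

theorem lastP_le_norm_sub_upP (x : Evec (d + 1)) (t' : Evec d) :
    lastP d x ≤ ‖x - upP d t' 0‖ := by
  rw [← lastP_sub_upP_zero x t']
  exact (le_abs_self _).trans (abs_lastP_le _)

theorem sub_upP_ne_zero {x : Evec (d + 1)} (hx : 0 < lastP d x) (t' : Evec d) :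
    x - upP d t' 0 ≠ 0 :=
  norm_pos_iff.1 (hx.trans_le (lastP_le_norm_sub_upP x t'))

theorem isOpen_halfSpace : IsOpen {x : Evec (d + 1) | 0 < lastP d x} :=
  isOpen_lt continuous_const (contDiff_coord (Fin.last d)).continuous

theorem norm_sub_upP_sq (x : Evec (d + 1)) (t' : Evec d) :
    ‖x - upP d t' 0‖ ^ 2 = ‖downP d x - t'‖ ^ 2 + lastP d x ^ 2 := by
  conv_lhs => rw [← upP_downP_lastP x, upP_sub_upP, norm_upP_sq, sub_zero]

theorem mul_sqrt_le_norm_sub_upP {x : Evec (d + 1)} {μ : ℝ} (hμ : 0 ≤ μ) (hμ₁ : μ ≤ 1)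
    (hμx : μ ≤ lastP d x) (t' : Evec d) :
    μ * √(1 + ‖downP d x - t'‖ ^ 2) ≤ ‖x - upP d t' 0‖ := by
  refine (abs_le_of_sq_le_sq' ?_ (norm_nonneg _)).2
  rw [norm_sub_upP_sq, mul_pow, Real.sq_sqrt (by positivity)]
  have hsq₁ : μ ^ 2 ≤ 1 := pow_le_one₀ hμ hμ₁
  have hsqx : μ ^ 2 ≤ lastP d x ^ 2 := pow_le_pow_left₀ hμ hμx 2
  nlinarith [sq_nonneg ‖downP d x - t'‖]

theorem integrable_inv_norm_pow {x : Evec (d + 1)} (hx : 0 < lastP d x) {s : ℕ} (hs : d < s) :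
    Integrable fun t' : Evec d => (‖x - upP d t' 0‖ ^ s)⁻¹ := by
  have hds : ((Module.finrank ℝ (Evec d) : ℕ) : ℝ) < s := by
    rw [finrank_euclideanSpace_fin]
    exact_mod_cast hs
  set μ := min 1 (lastP d x)
  have hμ : 0 < μ := lt_min one_pos hx
  have hjapanese := ((integrable_rpow_neg_one_add_norm_sq (μ := (volume : Measure (Evec d)))
    hds).const_mul (μ ^ s)⁻¹).comp_sub_left (downP d x)
  refine hjapanese.mono' ?_ (Eventually.of_forall fun t' => ?_)
  · exact (((continuous_const.sub continuous_upP_zero).norm.pow s).inv₀ fun t' =>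
      pow_ne_zero _ (norm_ne_zero_iff.2 (sub_upP_ne_zero hx t'))).aestronglyMeasurable
  · have hpos : 0 < 1 + ‖downP d x - t'‖ ^ 2 := by positivity
    have hrpow : (1 + ‖downP d x - t'‖ ^ 2) ^ (-(s : ℝ) / 2)
        = (√(1 + ‖downP d x - t'‖ ^ 2) ^ s)⁻¹ := by
      rw [Real.sqrt_eq_rpow, ← Real.rpow_natCast _ s, ← Real.rpow_mul hpos.le,
        ← Real.rpow_neg hpos.le]
      congr 1
      ring
    rw [hrpow, ← mul_inv, ← mul_pow, Real.norm_of_nonneg (by positivity)]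
    gcongr
    exact mul_sqrt_le_norm_sub_upP hμ.le (min_le_left _ _) (min_le_right _ _) t'

theorem integral_inv_norm_pow (x' : Evec d) {y : ℝ} (hy : 0 < y) :
    ∫ t' : Evec d, (‖upP d x' y - upP d t' 0‖ ^ (d + 1))⁻¹
      = y⁻¹ * ∫ t' : Evec d, (‖upP d t' 1‖ ^ (d + 1))⁻¹ := by
  simp only [upP_sub_upP, sub_zero]
  rw [integral_sub_left_eq_self (fun t' : Evec d => (‖upP d t' y‖ ^ (d + 1))⁻¹) volume x']
  have hdilate := Measure.integral_comp_smul volume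
    (fun t' : Evec d => (‖upP d t' y‖ ^ (d + 1))⁻¹) y
  have hhom (t' : Evec d) : (‖upP d (y • t') y‖ ^ (d + 1))⁻¹
      = (y ^ (d + 1))⁻¹ * (‖upP d t' 1‖ ^ (d + 1))⁻¹ := by
    have : upP d (y • t') y = y • upP d t' 1 := by rw [smul_upP, mul_one]
    rw [this, norm_smul, Real.norm_of_nonneg hy.le, mul_pow, mul_inv]
  simp only [hhom, integral_const_mul] at hdilate
  rw [finrank_euclideanSpace_fin, abs_of_pos (by positivity), smul_eq_mul, pow_succ] at hdilate
  field_simp at hdilate ⊢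
  linarith

end HalfSpace

section HomogeneousKernel

variable {E F : Type*} [NormedAddCommGroup E] [NormedSpace ℝ E] [NormedAddCommGroup F]
  [NormedSpace ℝ F] {s : ℕ}

/-- `T` is smooth away from the origin and positively homogeneous of degree `-s`. -/
structure HomSmooth (s : ℕ) (T : E → F) : Prop where
  contDiffOn : ContDiffOn ℝ (⊤ : ℕ∞) T {0}ᶜ
  homog : ∀ c : ℝ, 0 < c → ∀ a ≠ 0, T (c • a) = (c ^ s)⁻¹ • T a

theorem HomSmooth.exists_bound [ProperSpace E] {T : E → F} (hT : HomSmooth s T) :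
    ∃ C, 0 ≤ C ∧ ∀ a ≠ 0, ‖T a‖ ≤ C * (‖a‖ ^ s)⁻¹ := by
  have hsphere : sphere (0 : E) 1 ⊆ {0}ᶜ := fun a ha => ne_of_mem_sphere ha one_ne_zero
  obtain ⟨C, hC⟩ := (isCompact_sphere (0 : E) 1).exists_bound_of_continuousOn
    (hT.contDiffOn.continuousOn.mono hsphere)
  refine ⟨max C 0, le_max_right _ _, fun a ha => ?_⟩
  have hunit : ‖a‖⁻¹ • a ∈ sphere (0 : E) 1 :=
    mem_sphere_zero_iff_norm.2 (norm_smul_inv_norm (𝕜 := ℝ) ha)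
  have hscale := hT.homog ‖a‖ (norm_pos_iff.2 ha) (‖a‖⁻¹ • a) (hsphere hunit)
  rw [smul_inv_smul₀ (norm_ne_zero_iff.2 ha)] at hscale
  rw [hscale, norm_smul, Real.norm_of_nonneg (by positivity), mul_comm]
  gcongr
  exact (hC _ hunit).trans (le_max_left _ _)

theorem HomSmooth.differentiableAt {T : E → F} (hT : HomSmooth s T) {a : E} (ha : a ≠ 0) :
    DifferentiableAt ℝ T a :=
  (hT.contDiffOn.contDiffAt (isOpen_compl_singleton.mem_nhds ha)).differentiableAt (by simp)

protected theorem HomSmooth.fderiv {T : E → F} (hT : HomSmooth s T) :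
    HomSmooth (s + 1) (fderiv ℝ T) := by
  refine ⟨hT.contDiffOn.fderiv_of_isOpen isOpen_compl_singleton (by simp), fun c hc a ha => ?_⟩
  have hscale : (fun a => T (c • a)) =ᶠ[𝓝 a] fun a => (c ^ s)⁻¹ • T a := by
    filter_upwards [isOpen_ne.mem_nhds ha] with z hz using hT.homog c hc z hz
  have hderiv := hscale.fderiv_eq (𝕜 := ℝ)
  rw [fderiv_comp_smul, fderiv_fun_const_smul (hT.differentiableAt ha)] at hderiv
  rw [pow_succ, mul_inv, mul_comm, mul_smul, ← hderiv, inv_smul_smul₀ hc.ne']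

protected theorem HomSmooth.pdv {m : ℕ} {T : Evec m → ℝ} (hT : HomSmooth s T) (i : Fin m) :
    HomSmooth (s + 1) (pdv i T) := by
  refine ⟨contDiffOn_pdv isOpen_compl_singleton hT.contDiffOn i, fun c hc a ha => ?_⟩
  rw [pdv, hT.fderiv.homog c hc a ha]
  rfl

end HomogeneousKernel

section BoundaryConvolution

variable {d s : ℕ} {b : Evec d → ℝ} {M : ℝ} {x : Evec (d + 1)}

section VectorValued

variable {F : Type*} [NormedAddCommGroup F] [NormedSpace ℝ F] {T : Evec (d + 1) → F}

/-- Convolution, over the boundary of the upper half-space, of the density `b` with the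
kernel `T`. -/
def boundaryInt (b : Evec d → ℝ) (T : Evec (d + 1) → F) (x : Evec (d + 1)) : F :=
  ∫ t' : Evec d, b t' • T (x - upP d t' 0)

theorem boundaryInt_congr {T' : Evec (d + 1) → F} (h : ∀ a ≠ 0, T a = T' a)
    (hx : 0 < lastP d x) : boundaryInt b T x = boundaryInt b T' x :=
  integral_congr_ae <| .of_forall fun t' => congrArg (b t' • ·) (h _ (sub_upP_ne_zero hx t'))

theorem HomSmooth.continuous_integrand (hT : HomSmooth s T) (hb : Continuous b)
    (hx : 0 < lastP d x) : Continuous fun t' => b t' • T (x - upP d t' 0) :=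
  hb.smul <| hT.contDiffOn.continuousOn.comp_continuous
    (continuous_const.sub continuous_upP_zero) fun t' => sub_upP_ne_zero hx t'

theorem HomSmooth.integrable (hT : HomSmooth s T) (hs : d < s) (hb : Continuous b)
    (hM : ∀ t', |b t'| ≤ M) (hx : 0 < lastP d x) :
    Integrable fun t' => b t' • T (x - upP d t' 0) := by
  obtain ⟨C, -, hC⟩ := hT.exists_bound
  refine ((integrable_inv_norm_pow hx hs).const_mul (M * C)).mono'
    (hT.continuous_integrand hb hx).aestronglyMeasurable (.of_forall fun t' => ?_)
  rw [norm_smul, mul_assoc]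
  exact mul_le_mul (hM t') (hC _ (sub_upP_ne_zero hx t')) (norm_nonneg _)
    ((abs_nonneg _).trans (hM t'))

theorem half_norm_sub_upP_le {z : Evec (d + 1)} (hz : z ∈ ball x (lastP d x / 2)) (t' : Evec d) :
    ‖x - upP d t' 0‖ / 2 ≤ ‖z - upP d t' 0‖ := by
  have htriangle := norm_sub_le_norm_sub_add_norm_sub x z (upP d t' 0)
  rw [mem_ball_iff_norm'] at hz
  linarith [lastP_le_norm_sub_upP x t']

theorem lastP_pos_of_mem_ball {z : Evec (d + 1)} (hx : 0 < lastP d x)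
    (hz : z ∈ ball x (lastP d x / 2)) : 0 < lastP d z := by
  have hle := (le_abs_self _).trans (abs_lastP_le (x - z))
  rw [lastP_sub] at hle
  rw [mem_ball_iff_norm'] at hz
  linarith

theorem HomSmooth.exists_bound_of_mem_ball (hT : HomSmooth s T) (hM : ∀ t', |b t'| ≤ M)
    (hx : 0 < lastP d x) :
    ∃ C, ∀ t', ∀ z ∈ ball x (lastP d x / 2),
      ‖b t' • T (z - upP d t' 0)‖ ≤ C * (‖x - upP d t' 0‖ ^ s)⁻¹ := by
  obtain ⟨C, hC₀, hC⟩ := hT.exists_bound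
  refine ⟨M * (C * 2 ^ s), fun t' z hz => ?_⟩
  rw [norm_smul, mul_assoc]
  refine mul_le_mul (hM t') ?_ (norm_nonneg _) ((abs_nonneg _).trans (hM t'))
  have hxt : 0 < ‖x - upP d t' 0‖ := norm_pos_iff.2 (sub_upP_ne_zero hx t')
  calc ‖T (z - upP d t' 0)‖ ≤ C * (‖z - upP d t' 0‖ ^ s)⁻¹ :=
        hC _ (sub_upP_ne_zero (lastP_pos_of_mem_ball hx hz) t')
    _ ≤ C * ((‖x - upP d t' 0‖ / 2) ^ s)⁻¹ := by
        gcongr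
        exact half_norm_sub_upP_le hz t'
    _ = C * 2 ^ s * (‖x - upP d t' 0‖ ^ s)⁻¹ := by rw [div_pow, inv_div]; ring

theorem HomSmooth.hasFDerivAt_boundaryInt (hT : HomSmooth s T) (hs : d ≤ s)
    (hb : Continuous b) (hM : ∀ t', |b t'| ≤ M) (hx : 0 < lastP d x)
    (hint : Integrable fun t' => b t' • T (x - upP d t' 0)) :
    HasFDerivAt (boundaryInt b T) (boundaryInt b (fderiv ℝ T) x) x := by
  obtain ⟨C, hC⟩ := hT.fderiv.exists_bound_of_mem_ball hM hx
  have hball := ball_mem_nhds x (half_pos hx)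
  refine hasFDerivAt_integral_of_dominated_of_fderiv_le
    (F := fun z t' => b t' • T (z - upP d t' 0))
    (F' := fun z t' => b t' • fderiv ℝ T (z - upP d t' 0)) hball ?_ hint
    (hT.fderiv.continuous_integrand hb hx).aestronglyMeasurable (.of_forall hC)
    ((integrable_inv_norm_pow hx (Nat.lt_succ_of_le hs)).const_mul C)
    (.of_forall fun t' z hz => ?_)
  · filter_upwards [hball] with z hz
    exact (hT.continuous_integrand hb (lastP_pos_of_mem_ball hx hz)).aestronglyMeasurable
  · have hTz := hT.differentiableAt (sub_upP_ne_zero (lastP_pos_of_mem_ball hx hz) t')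
    exact (hTz.hasFDerivAt.comp z ((hasFDerivAt_id z).sub_const _)).const_smul (b t')

theorem HomSmooth.contDiffOn_boundaryInt_nat.{u} (hb : Continuous b) (hM : ∀ t', |b t'| ≤ M)
    (n : ℕ) : ∀ {F : Type u} [NormedAddCommGroup F] [NormedSpace ℝ F] {s : ℕ}
      {T : Evec (d + 1) → F}, HomSmooth s T → d < s →
      ContDiffOn ℝ n (boundaryInt b T) {x | 0 < lastP d x} := by
  induction n with
  | zero =>
    intro F _ _ s T hT hs
    refine contDiffOn_zero.2 fun x hx => ContinuousAt.continuousWithinAt ?_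
    exact (hT.hasFDerivAt_boundaryInt hs.le hb hM hx (hT.integrable hs hb hM hx)).continuousAt
  | succ n ih =>
    intro F _ _ s T hT hs
    have hderiv : ∀ x ∈ {x | 0 < lastP d x}, HasFDerivAt (boundaryInt b T)
        (boundaryInt b (fderiv ℝ T) x) x := fun x hx =>
      hT.hasFDerivAt_boundaryInt hs.le hb hM hx (hT.integrable hs hb hM hx)
    push_cast
    refine (contDiffOn_succ_iff_fderiv_of_isOpen isOpen_halfSpace).2
      ⟨fun x hx => (hderiv x hx).differentiableAt.differentiableWithinAt, by simp, ?_⟩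
    exact (ih hT.fderiv (hs.trans s.lt_succ_self)).congr fun x hx => (hderiv x hx).fderiv

-- Only the integrability of `T` itself is delicate when `s = d`: its derivatives decay faster.
theorem HomSmooth.contDiffOn_boundaryInt (hT : HomSmooth s T) (hs : d ≤ s)
    (hb : Continuous b) (hM : ∀ t', |b t'| ≤ M)
    (hint : ∀ x, 0 < lastP d x → Integrable fun t' => b t' • T (x - upP d t' 0)) :
    ContDiffOn ℝ (⊤ : ℕ∞) (boundaryInt b T) {x | 0 < lastP d x} := by
  have hderiv : ∀ x ∈ {x | 0 < lastP d x}, HasFDerivAt (boundaryInt b T)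
      (boundaryInt b (fderiv ℝ T) x) x := fun x hx =>
    hT.hasFDerivAt_boundaryInt hs hb hM hx (hint x hx)
  refine (contDiffOn_infty_iff_fderiv_of_isOpen isOpen_halfSpace).2
    ⟨fun x hx => (hderiv x hx).differentiableAt.differentiableWithinAt, ?_⟩
  refine contDiffOn_infty.2 fun n => ?_
  exact (contDiffOn_boundaryInt_nat hb hM n hT.fderiv (Nat.lt_succ_of_le hs)).congr
    fun x hx => (hderiv x hx).fderiv

end VectorValued

variable {T : Evec (d + 1) → ℝ}

theorem HomSmooth.pdv_boundaryInt (hT : HomSmooth s T) (hs : d ≤ s)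
    (hb : Continuous b) (hM : ∀ t', |b t'| ≤ M) (hx : 0 < lastP d x)
    (hint : Integrable fun t' => b t' • T (x - upP d t' 0)) (i : Fin (d + 1)) :
    pdv i (boundaryInt b T) x = boundaryInt b (pdv i T) x := by
  rw [pdv, (hT.hasFDerivAt_boundaryInt hs hb hM hx hint).fderiv, boundaryInt,
    ContinuousLinearMap.integral_apply (hT.fderiv.integrable (Nat.lt_succ_of_le hs) hb hM hx)]
  rfl

theorem HomSmooth.pdv_pdv_boundaryInt (hT : HomSmooth s T) (hs : d ≤ s)
    (hb : Continuous b) (hM : ∀ t', |b t'| ≤ M)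
    (hint : ∀ x, 0 < lastP d x → Integrable fun t' => b t' • T (x - upP d t' 0))
    (hx : 0 < lastP d x) (i j : Fin (d + 1)) :
    pdv i (pdv j (boundaryInt b T)) x = boundaryInt b (pdv i (pdv j T)) x := by
  have hderiv : pdv j (boundaryInt b T) =ᶠ[𝓝 x] boundaryInt b (pdv j T) := by
    filter_upwards [isOpen_halfSpace.mem_nhds hx] with z hz
    exact hT.pdv_boundaryInt hs hb hM hz (hint z hz) j
  have hs' : d < s + 1 := Nat.lt_succ_of_le hs
  rw [pdv, hderiv.fderiv_eq]
  exact (hT.pdv j).pdv_boundaryInt hs'.le hb hM hx ((hT.pdv j).integrable hs' hb hM hx) i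

theorem boundaryInt_sum_mul {ι : Type*} {S : Finset ι} {T : ι → Evec (d + 1) → ℝ}
    (hint : ∀ i ∈ S, Integrable fun t' => b t' • T i (x - upP d t' 0)) (c : ι → ℝ) :
    boundaryInt b (fun a => ∑ i ∈ S, T i a * c i) x = ∑ i ∈ S, boundaryInt b (T i) x * c i := by
  simp only [boundaryInt, Finset.smul_sum, ← smul_mul_assoc]
  rw [integral_finsetSum S fun i hi => (hint i hi).mul_const (c i)]
  simp only [integral_mul_const]

end BoundaryConvolution

section PoissonKernel

variable {m d k : ℕ}

theorem reflv_smul_left {c : ℝ} (hc : c ≠ 0) (a v : Evec m) : reflv (c • a) v = reflv a v := by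
  simp only [reflv_eq_reflection, Submodule.span_singleton_smul_eq hc.isUnit]

theorem homSmooth_inv_norm_pow_mul_comp_reflv (n : ℕ) {p : Evec m → ℝ}
    (hp : ContDiff ℝ (⊤ : ℕ∞) p) (v : Evec m) :
    HomSmooth n fun a : Evec m => (‖a‖ ^ n)⁻¹ * p (reflv a v) where
  contDiffOn := (contDiffOn_inv_norm_pow n).mul <| hp.comp_contDiffOn <|
    contDiffOn_reflv.comp (f := fun a => (a, v)) (contDiff_id.prodMk contDiff_const).contDiffOn
      fun _ ha => ⟨ha, trivial⟩
  homog c hc a _ := by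
    rw [reflv_smul_left hc.ne', norm_smul, Real.norm_of_nonneg hc.le, mul_pow, mul_inv,
      smul_eq_mul, mul_assoc]

/-- The half-space Poisson kernel `a_m |a|^{-m} p(R_a v)`, `m = d + 1`, for the boundary value `p`,
without the normalizing constant; `a` stands for the vector `x - t` from the boundary. -/
def halfSpaceKernel (p : Evec (d + 1) → ℝ) (a v : Evec (d + 1)) : ℝ :=
  a (Fin.last d) * (‖a‖ ^ (d + 1))⁻¹ * p (reflv a v)

theorem Dk_halfSpaceKernel (hdk : 4 < d + 1 + 2 * k) {p : Evec (d + 1) → ℝ}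
    (hp : IsHk (d + 1) k p) {a : Evec (d + 1)} (ha : a ≠ 0) (v : Evec (d + 1)) :
    Dk (d + 1) k (halfSpaceKernel p) a v = 0 :=
  hp.eulerHarmonic.rotHarmonic.Dk_coord_mul hdk ha v (Fin.last d)

theorem homSmooth_halfSpaceKernel {p : Evec (d + 1) → ℝ} (hp : ContDiff ℝ (⊤ : ℕ∞) p)
    (v : Evec (d + 1)) : HomSmooth d fun a => halfSpaceKernel p a v := by
  have hS := homSmooth_inv_norm_pow_mul_comp_reflv (d + 1) hp v
  simp only [halfSpaceKernel, mul_assoc]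
  refine ⟨(contDiff_coord (Fin.last d)).contDiffOn.mul hS.contDiffOn, fun c hc a ha => ?_⟩
  simp only [hS.homog c hc a ha, PiLp.smul_apply, smul_eq_mul]
  field_simp
  ring

theorem halfSpaceKernel_eq_sum {ι : Type*} {S : Finset ι} {u : ι → Evec (d + 1)}
    {r : ι → Evec (d + 1) → ℝ}
    (hur : ∀ q, IsHk (d + 1) k q → ∀ v, q v = ∑ i ∈ S, q (u i) * r i v)
    {p : Evec (d + 1) → ℝ} (hp : IsHk (d + 1) k p) (a v : Evec (d + 1)) :
    halfSpaceKernel p a v = ∑ i ∈ S, halfSpaceKernel p a (u i) * r i v := by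
  rw [halfSpaceKernel, hur _ (hp.comp_reflv a), Finset.mul_sum]
  simp only [halfSpaceKernel, mul_assoc]

end PoissonKernel

section PoissonLift

variable {d k : ℕ} {b : Evec d → ℝ} {M : ℝ} {p : Evec (d + 1) → ℝ} {x : Evec (d + 1)}

-- The factor `a_m` of the kernel is constant along the boundary, and what remains has degree `-m`.
theorem integrable_halfSpaceKernel (hp : ContDiff ℝ (⊤ : ℕ∞) p) (hb : Continuous b)
    (hM : ∀ t', |b t'| ≤ M) (hx : 0 < lastP d x) (v : Evec (d + 1)) :
    Integrable fun t' => b t' • halfSpaceKernel p (x - upP d t' 0) v := by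
  refine (((homSmooth_inv_norm_pow_mul_comp_reflv (d + 1) hp v).integrable d.lt_succ_self hb hM
    hx).const_mul (lastP d x)).congr (.of_forall fun t' => ?_)
  have hlast : (x - upP d t' 0) (Fin.last d) = lastP d x := lastP_sub_upP_zero x t'
  simp only [halfSpaceKernel, hlast, smul_eq_mul]
  ring

/-- The Poisson extension to the upper half-space of the boundary value `(t', v) ↦ b(t') p(v)`,
without the normalizing constant. -/
def poissonLift (b : Evec d → ℝ) (p : Evec (d + 1) → ℝ) (x v : Evec (d + 1)) : ℝ :=
  boundaryInt b (fun a => halfSpaceKernel p a v) x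

theorem poissonLift_eq_sum {ι : Type*} {S : Finset ι} {u : ι → Evec (d + 1)}
    {r : ι → Evec (d + 1) → ℝ}
    (hur : ∀ q, IsHk (d + 1) k q → ∀ v, q v = ∑ i ∈ S, q (u i) * r i v)
    (hp : IsHk (d + 1) k p) (hb : Continuous b) (hM : ∀ t', |b t'| ≤ M) (hx : 0 < lastP d x)
    (v : Evec (d + 1)) :
    poissonLift b p x v = ∑ i ∈ S, poissonLift b p x (u i) * r i v := by
  simp only [poissonLift, halfSpaceKernel_eq_sum hur hp _ v]
  exact boundaryInt_sum_mul (fun i _ => integrable_halfSpaceKernel hp.contDiff hb hM hx (u i)) _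

theorem contDiffOn_poissonLift (hp : ContDiff ℝ (⊤ : ℕ∞) p) (hb : Continuous b)
    (hM : ∀ t', |b t'| ≤ M) (v : Evec (d + 1)) :
    ContDiffOn ℝ (⊤ : ℕ∞) (fun x => poissonLift b p x v) {x | 0 < lastP d x} :=
  (homSmooth_halfSpaceKernel hp v).contDiffOn_boundaryInt le_rfl hb hM fun _ hx =>
    integrable_halfSpaceKernel hp hb hM hx v

theorem jointSmooth_poissonLift (hp : IsHk (d + 1) k p) (hb : Continuous b)
    (hM : ∀ t', |b t'| ≤ M) : JointSmooth {x | 0 < lastP d x} (poissonLift b p) := by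
  obtain ⟨N, u, r, -, hr, hur⟩ := exists_lagrange_interpolation_isHk (d + 1) k
  have hsum : JointSmooth {x | 0 < lastP d x} fun x v => ∑ i, poissonLift b p x (u i) * r i v :=
    .sum fun i _ => .tensor (contDiffOn_poissonLift hp.contDiff hb hM (u i)) (hr i).contDiff
  exact hsum.congr fun q hq => poissonLift_eq_sum hur hp hb hM hq.1 q.2

/-- Interpolation in the fibre variable turns both sides into finite sums, in which only second
derivatives of scalar boundary convolutions occur. -/
theorem Dk_poissonLift (hp : IsHk (d + 1) k p) (hb : Continuous b) (hM : ∀ t', |b t'| ≤ M)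
    (hx : 0 < lastP d x) (v : Evec (d + 1)) :
    Dk (d + 1) k (poissonLift b p) x v
      = boundaryInt b (fun a => Dk (d + 1) k (halfSpaceKernel p) a v) x := by
  obtain ⟨N, u, r, -, hr, hur⟩ := exists_lagrange_interpolation_isHk (d + 1) k
  have hr' : ∀ i ∈ Finset.univ, ContDiff ℝ (⊤ : ℕ∞) (r i) := fun i _ => (hr i).contDiff
  let T (i : Fin N) (a : Evec (d + 1)) : ℝ := halfSpaceKernel p a (u i)
  have hT (i : Fin N) : HomSmooth d (T i) := homSmooth_halfSpaceKernel hp.contDiff (u i)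
  have hint (i : Fin N) (x) (hx : 0 < lastP d x) :
      Integrable fun t' => b t' • T i (x - upP d t' 0) :=
    integrable_halfSpaceKernel hp.contDiff hb hM hx (u i)
  have hlift_smooth (i : Fin N) :
      ContDiffOn ℝ (⊤ : ℕ∞) (boundaryInt b (T i)) {x | 0 < lastP d x} :=
    contDiffOn_poissonLift hp.contDiff hb hM (u i)
  have hlift : Dk (d + 1) k (poissonLift b p) x v = ∑ i, ∑ e, ∑ e',
      boundaryInt b (pdv e (pdv e' (T i))) x * bosonicSymbol k e e' (r i) v := by
    rw [Dk_congr (f := fun x v => ∑ i, boundaryInt b (T i) x * r i v) isOpen_halfSpace k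
        (fun x hx => poissonLift_eq_sum hur hp hb hM hx) hx v,
      Dk_sum_tensor isOpen_halfSpace k (fun i _ => hlift_smooth i) hr' hx v]
    simp only [(hT _).pdv_pdv_boundaryInt le_rfl hb hM (hint _) hx]
  have hkernel : ∀ a ≠ 0, Dk (d + 1) k (halfSpaceKernel p) a v
      = ∑ i, ∑ e, ∑ e', pdv e (pdv e' (T i)) a * bosonicSymbol k e e' (r i) v := fun a ha => by
    rw [Dk_congr isOpen_compl_singleton k (fun a _ => halfSpaceKernel_eq_sum hur hp a) ha v,
      Dk_sum_tensor (h := T) isOpen_compl_singleton k (fun i _ => (hT i).contDiffOn) hr' ha v]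
  rw [hlift, boundaryInt_congr hkernel hx]
  simp only [← Fintype.sum_prod_type']
  refine (boundaryInt_sum_mul (fun a _ => ?_) _).symm
  exact (((hT a.1).pdv a.2.2).pdv a.2.1).integrable (by lia) hb hM hx

theorem Dk_poissonLift_eq_zero (hdk : 4 < d + 1 + 2 * k) (hp : IsHk (d + 1) k p)
    (hb : Continuous b) (hM : ∀ t', |b t'| ≤ M) (hx : 0 < lastP d x) (v : Evec (d + 1)) :
    Dk (d + 1) k (poissonLift b p) x v = 0 := by
  rw [Dk_poissonLift hp hb hM hx,
    boundaryInt_congr (fun a ha => Dk_halfSpaceKernel hdk hp ha v) hx]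
  simp [boundaryInt]

end PoissonLift

section PoissonIntegral

variable {d k : ℕ} {Z : Evec (d + 1) → Evec (d + 1) → ℝ} {f : Evec d → Evec (d + 1) → ℝ} {M : ℝ}

theorem ae_sphereM_norm_eq_one (m : ℕ) : ∀ᵐ u ∂(sphereM m), ‖u‖ = 1 := by
  rw [sphereM, ae_map_iff measurable_subtype_coe.aemeasurable
    (measurableSet_eq_fun measurable_norm measurable_const)]
  exact .of_forall norm_eq_of_mem_sphere

theorem norm_reflv {m : ℕ} (a u : Evec m) : ‖reflv a u‖ = ‖u‖ := by
  rw [reflv_eq_reflection, LinearIsometryEquiv.norm_map]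

theorem IsZk.reflv_left {m : ℕ} {Z : Evec m → Evec m → ℝ} (hZ : IsZk m k Z) (a u v : Evec m) :
    Z (reflv a u) v = Z u (reflv a v) := by
  rw [reflv_eq_reflection, ← hZ.2.2.2.2 (ℝ ∙ a)ᗮ.reflection u, Submodule.reflection_reflection]

theorem integral_PH_mul (hZ : IsZk (d + 1) k Z) {g q : Evec (d + 1) → ℝ}
    (hq : IsHk (d + 1) k q) (hgq : ∀ u ∈ closedBall (0 : Evec (d + 1)) 1, g u = q u)
    (x' : Evec d) (y : ℝ) (t' : Evec d) (v : Evec (d + 1)) :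
    ∫ u, PH d k Z x' y t' u v * g u ∂(sphereM (d + 1))
      = cmk (d + 1) k * (y / ‖upP d x' y - upP d t' 0‖ ^ (d + 1))
        * q (reflv (upP d x' y - upP d t' 0) v) := by
  rw [← hZ.2.1 q hq, ← integral_const_mul]
  refine integral_congr_ae ?_
  filter_upwards [ae_sphereM_norm_eq_one (d + 1)] with u hu
  rw [PH, hgq u (by simp [hu]), hZ.reflv_left, mul_assoc]

theorem integral_PH_mul_eq_sum (hZ : IsZk (d + 1) k Z) {g q : Evec (d + 1) → ℝ}
    (hq : IsHk (d + 1) k q) (hgq : ∀ u ∈ closedBall (0 : Evec (d + 1)) 1, g u = q u)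
    {ι : Type*} {S : Finset ι} {u : ι → Evec (d + 1)} {r : ι → Evec (d + 1) → ℝ}
    (hu : ∀ i ∈ S, u i ∈ closedBall 0 1)
    (hur : ∀ q, IsHk (d + 1) k q → ∀ v, q v = ∑ i ∈ S, q (u i) * r i v)
    (x : Evec (d + 1)) (t' : Evec d) (v : Evec (d + 1)) :
    ∫ w, PH d k Z (downP d x) (lastP d x) t' w v * g w ∂(sphereM (d + 1))
      = ∑ i ∈ S, (cmk (d + 1) k * g (u i)) • halfSpaceKernel (r i) (x - upP d t' 0) v := by
  have hlast : (x - upP d t' 0) (Fin.last d) = lastP d x := lastP_sub_upP_zero x t'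
  rw [integral_PH_mul hZ hq hgq, upP_downP_lastP, hur q hq, Finset.mul_sum]
  refine Finset.sum_congr rfl fun i hi => ?_
  rw [halfSpaceKernel, hlast, hgq _ (hu i hi), smul_eq_mul]
  ring

theorem exists_PHint_eq_sum_poissonLift (hZ : IsZk (d + 1) k Z)
    (hfc : ContinuousOn (fun q : Evec d × Evec (d + 1) => f q.1 q.2)
      (Set.univ ×ˢ closedBall (0 : Evec (d + 1)) 1))
    (hM : ∀ (x' : Evec d) (u : Evec (d + 1)), ‖u‖ ≤ 1 → |f x' u| ≤ M)
    (hf : ∀ x' : Evec d, ∃ q, IsHk (d + 1) k q ∧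
      ∀ u ∈ closedBall (0 : Evec (d + 1)) 1, f x' u = q u) :
    ∃ (N : ℕ) (b : Fin N → Evec d → ℝ) (p : Fin N → Evec (d + 1) → ℝ),
      (∀ i, JointSmooth {x | 0 < lastP d x} (poissonLift (b i) (p i))) ∧
      (4 < d + 1 + 2 * k → ∀ i x, 0 < lastP d x → ∀ v,
        Dk (d + 1) k (poissonLift (b i) (p i)) x v = 0) ∧
      ∀ x, 0 < lastP d x → ∀ v,
        PHint d k Z f (downP d x) (lastP d x) v = ∑ i, poissonLift (b i) (p i) x v := by
  obtain ⟨N, u, p, hu, hp, hup⟩ := exists_lagrange_interpolation_isHk (d + 1) k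
  let b (i : Fin N) (t' : Evec d) : ℝ := cmk (d + 1) k * f t' (u i)
  have hb (i : Fin N) : Continuous (b i) := continuous_const.mul <|
    hfc.comp_continuous (f := fun t' => (t', u i)) (by fun_prop) fun t' => ⟨trivial, hu i⟩
  have hbM (i : Fin N) (t' : Evec d) : |b i t'| ≤ |cmk (d + 1) k| * M := by
    rw [abs_mul]
    exact mul_le_mul_of_nonneg_left (hM t' _ (mem_closedBall_zero_iff.1 (hu i))) (abs_nonneg _)
  refine ⟨N, b, p, fun i => jointSmooth_poissonLift (hp i) (hb i) (hbM i),
    fun hdk i x hx => Dk_poissonLift_eq_zero hdk (hp i) (hb i) (hbM i) hx, fun x hx v => ?_⟩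
  have hinner (t' : Evec d) :
      ∫ w, PH d k Z (downP d x) (lastP d x) t' w v * f t' w ∂(sphereM (d + 1))
        = ∑ i, b i t' • halfSpaceKernel (p i) (x - upP d t' 0) v := by
    obtain ⟨q, hq, hfq⟩ := hf t'
    exact integral_PH_mul_eq_sum hZ hq hfq (fun i _ => hu i) hup x t' v
  simp only [PHint, hinner]
  exact integral_finsetSum _ fun i _ =>
    integrable_halfSpaceKernel (hp i).contDiff (hb i) (hbM i) hx v

theorem abs_PHint_le (hZ : IsZk (d + 1) k Z)
    (hM : ∀ (x' : Evec d) (u : Evec (d + 1)), ‖u‖ ≤ 1 → |f x' u| ≤ M)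
    (hf : ∀ x' : Evec d, ∃ q, IsHk (d + 1) k q ∧
      ∀ u ∈ closedBall (0 : Evec (d + 1)) 1, f x' u = q u)
    (x' : Evec d) {y : ℝ} (hy : 0 < y) {v : Evec (d + 1)} (hv : ‖v‖ ≤ 1) :
    |PHint d k Z f x' y v|
      ≤ |cmk (d + 1) k| * (∫ t' : Evec d, (‖upP d t' 1‖ ^ (d + 1))⁻¹) * M := by
  have hinner (t' : Evec d) :
      ‖∫ u, PH d k Z x' y t' u v * f t' u ∂(sphereM (d + 1))‖
        ≤ |cmk (d + 1) k| * y * M * (‖upP d x' y - upP d t' 0‖ ^ (d + 1))⁻¹ := by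
    obtain ⟨q, hq, hfq⟩ := hf t'
    set a := upP d x' y - upP d t' 0
    have hav : ‖reflv a v‖ ≤ 1 := by rwa [norm_reflv]
    have hqM : |q (reflv a v)| ≤ M := by
      rw [← hfq _ (mem_closedBall_zero_iff.2 hav)]
      exact hM t' _ hav
    rw [integral_PH_mul hZ hq hfq, Real.norm_eq_abs, abs_mul, abs_mul,
      abs_of_nonneg (by positivity : 0 ≤ y / ‖a‖ ^ (d + 1))]
    calc |cmk (d + 1) k| * (y / ‖a‖ ^ (d + 1)) * |q (reflv a v)|
        ≤ |cmk (d + 1) k| * (y / ‖a‖ ^ (d + 1)) * M := by gcongr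
      _ = |cmk (d + 1) k| * y * M * (‖a‖ ^ (d + 1))⁻¹ := by ring
  have hx : 0 < lastP d (upP d x' y) := by rwa [lastP_upP]
  calc |PHint d k Z f x' y v|
      ≤ ∫ t', |cmk (d + 1) k| * y * M * (‖upP d x' y - upP d t' 0‖ ^ (d + 1))⁻¹ :=
        norm_integral_le_of_norm_le ((integrable_inv_norm_pow hx d.lt_succ_self).const_mul _)
          (.of_forall hinner)
    _ = |cmk (d + 1) k| * (∫ t' : Evec d, (‖upP d t' 1‖ ^ (d + 1))⁻¹) * M := by
        rw [integral_const_mul, integral_inv_norm_pow x' hy]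
        field_simp

end PoissonIntegral

/-- Dirichlet problem in the upper half-space with continuous bounded
data: smoothness, `𝒟_k P_H[f] = 0`, and the sup-norm bound with a constant depending
only on `m` and `k`. Here `m = d+1 ≥ 3`. -/
theorem stmt_2 (d k : ℕ) (hm : 3 ≤ d + 1) (hk : 1 ≤ k)
    (Z : Evec (d + 1) → Evec (d + 1) → ℝ) (hZ : IsZk (d + 1) k Z) :
    ∃ a : ℝ, 0 < a ∧
      ∀ f : Evec d → Evec (d + 1) → ℝ,
        ContinuousOn (fun q : Evec d × Evec (d + 1) => f q.1 q.2)
          (Set.univ ×ˢ closedBall (0 : Evec (d + 1)) 1) →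
        (∃ M : ℝ, ∀ (x' : Evec d) (u : Evec (d + 1)), ‖u‖ ≤ 1 → |f x' u| ≤ M) →
        (∀ x' : Evec d, ∃ q, IsHk (d + 1) k q ∧
          ∀ u ∈ closedBall (0 : Evec (d + 1)) 1, f x' u = q u) →
        (ContDiffOn ℝ (⊤ : ℕ∞)
            (fun q : (Evec d × ℝ) × Evec (d + 1) => PHint d k Z f q.1.1 q.1.2 q.2)
            {q : (Evec d × ℝ) × Evec (d + 1) | 0 < q.1.2 ∧ ‖q.2‖ < 1}) ∧
        (∀ x : Evec (d + 1), 0 < lastP d x → ∀ v : Evec (d + 1), ‖v‖ < 1 →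
          Dk (d + 1) k (fun x₁ v₁ => PHint d k Z f (downP d x₁) (lastP d x₁) v₁) x v = 0) ∧
        (∀ M : ℝ, (∀ (x' : Evec d) (u : Evec (d + 1)), ‖u‖ ≤ 1 → |f x' u| ≤ M) →
          ∀ (x' : Evec d) (y : ℝ) (v : Evec (d + 1)), 0 < y → ‖v‖ < 1 →
            |PHint d k Z f x' y v| ≤ a * M) := by
  have hintegral : 0 ≤ ∫ t' : Evec d, (‖upP d t' 1‖ ^ (d + 1))⁻¹ :=
    integral_nonneg fun t' => by positivity
  refine ⟨|cmk (d + 1) k| * (∫ t' : Evec d, (‖upP d t' 1‖ ^ (d + 1))⁻¹) + 1,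
    add_pos_of_nonneg_of_pos (mul_nonneg (abs_nonneg _) hintegral) one_pos,
    fun f hfc ⟨M₀, hM₀⟩ hf => ?_⟩
  obtain ⟨N, b, p, hsmooth, hDk, hsum⟩ := exists_PHint_eq_sum_poissonLift hZ hfc hM₀ hf
  refine ⟨?_, fun x hx v _ => ?_, fun M hM x' y v hy hv => ?_⟩
  · have hjoint : JointSmooth {x | 0 < lastP d x} fun x v =>
        PHint d k Z f (downP d x) (lastP d x) v :=
      (JointSmooth.sum fun i _ => hsmooth i).congr fun q hq => hsum q.1 hq.1 q.2
    refine (hjoint.comp ((contDiff_upP.comp contDiff_fst).prodMk contDiff_snd).contDiffOn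
      fun q hq => ⟨?_, trivial⟩).congr fun q _ => ?_
    · change 0 < lastP d (upP d q.1.1 q.1.2)
      simpa only [lastP_upP] using hq.1
    · simp only [Function.comp_apply, lastP_upP, downP_upP]
  · rw [Dk_congr isOpen_halfSpace k hsum hx v,
      Dk_sum isOpen_halfSpace k (fun i _ => hsmooth i) hx v]
    exact Finset.sum_eq_zero fun i _ => hDk (by lia) i x hx v
  · have hM_nonneg : 0 ≤ M := (abs_nonneg _).trans (hM x' 0 (by simp))
    linarith [abs_PHint_le hZ hM hf x' hy hv.le]
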